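/- arXiv:2511.12187 — 4 statements merged into one kernel-verified Lean document; each statement's English description precedes it below -/
import Mathlib

section
/- Let q ∈ ℋ and k ∈ ℕ₀, and define η_k(a) = Σ_{i=1}^{⌊k/2⌋} a^{k+1−2i} ∏_{j=1}^{i−1}(k+1−2j) + ∏_{j=1}^{⌊k/2⌋}(k+1−2j) (empty sums are 0, empty products are 1). Then for all x ∈ ℝ: (a) |f_k(x)| ≤ η_k(|x|); (b) |f_k'(x)| ≤ |x|·η_k(|x|) + ∫_ℝ |y|^k ψ(y) dy. -/
open MeasureTheory Finset

/-- Density of the standard normal distribution. -/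
noncomputable def gaussD (x : ℝ) : ℝ := (Real.sqrt (2 * Real.pi))⁻¹ * Real.exp (-(x ^ 2) / 2)

/-- Expectation of `g` with respect to the standard normal distribution, `Φ(g)`. -/
noncomputable def PhiInt (g : ℝ → ℝ) : ℝ := ∫ x, g x * gaussD x

/-- The class `ℋ` of monotonically decreasing, left-continuous functions `ℝ → [0,1]`. -/
def memH (h : ℝ → ℝ) : Prop :=
  (∀ x, h x ∈ Set.Icc (0 : ℝ) 1) ∧ Antitone h ∧
    ∀ x, ContinuousWithinAt h (Set.Iic x) x

/-- The Stein solution `f_k` for the function `|x|^k q(x)`. -/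
noncomputable def steinF (q : ℝ → ℝ) (k : ℕ) (x : ℝ) : ℝ :=
  (gaussD x)⁻¹ *
    ∫ y in Set.Iic x, (|y| ^ k * q y - PhiInt (fun v => |v| ^ k * q v)) * gaussD y

/-- `f_k'`, defined through Stein's equation. -/
noncomputable def steinF' (q : ℝ → ℝ) (k : ℕ) (x : ℝ) : ℝ :=
  x * steinF q k x + |x| ^ k * q x - PhiInt (fun v => |v| ^ k * q v)

/-- The auxiliary function `η_k(a)`. -/
noncomputable def eta (k : ℕ) (a : ℝ) : ℝ :=
  (∑ i ∈ Finset.Icc 1 (k / 2),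
      a ^ (k + 1 - 2 * i) * ∏ j ∈ Finset.Icc 1 (i - 1), ((k : ℝ) + 1 - 2 * (j : ℝ)))
    + ∏ j ∈ Finset.Icc 1 (k / 2), ((k : ℝ) + 1 - 2 * (j : ℝ))

theorem gD_pos (x : ℝ) : 0 < gaussD x := by
  unfold gaussD
  have := Real.pi_pos
  positivity

theorem gD_neg (x : ℝ) : gaussD (-x) = gaussD x := by
  simp [gaussD]

theorem gD_cont : Continuous gaussD := by
  unfold gaussD
  fun_prop

theorem gD_zero_le : gaussD 0 ≤ 1 / 2 := by
  have h : (2 : ℝ) ≤ Real.sqrt (2 * Real.pi) := by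
    apply Real.le_sqrt_of_sq_le
    nlinarith [Real.pi_gt_three]
  simp only [gaussD]
  have h2 : (Real.sqrt (2 * Real.pi))⁻¹ ≤ 2⁻¹ := inv_anti₀ (by norm_num) h
  norm_num at h2 ⊢
  exact h2

theorem gD_le_zero (x : ℝ) : gaussD x ≤ gaussD 0 := by
  unfold gaussD
  refine mul_le_mul_of_nonneg_left (Real.exp_le_exp.mpr ?_) (by positivity)
  nlinarith [sq_nonneg x]

theorem gD_deriv (x : ℝ) : HasDerivAt gaussD (-(x * gaussD x)) x := by
  unfold gaussD
  have h1 : HasDerivAt (fun x : ℝ => -(x ^ 2) / 2) (-x) x := by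
    have := ((hasDerivAt_pow 2 x).neg).div_const 2
    refine this.congr_deriv ?_
    simp
    ring
  have := (h1.exp).const_mul ((Real.sqrt (2 * Real.pi))⁻¹)
  refine this.congr_deriv ?_
  ring

theorem gM_integrable (k : ℕ) : Integrable (fun y : ℝ => |y| ^ k * gaussD y) := by
  have h := (integrable_rpow_mul_exp_neg_mul_sq (b := 1 / 2) (by norm_num) (s := (k : ℝ))
    (by have : (0 : ℝ) ≤ k := Nat.cast_nonneg k
        linarith)).norm.const_mul ((Real.sqrt (2 * Real.pi))⁻¹)
  refine h.congr (Filter.Eventually.of_forall fun y => ?_)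
  simp only [Real.rpow_natCast, norm_mul, norm_pow, Real.norm_eq_abs, Real.abs_exp, gaussD]
  rw [show -(1 / 2 : ℝ) * y ^ 2 = -(y ^ 2) / 2 by ring]
  ring

theorem gD_integrable : Integrable gaussD := by
  simpa using gM_integrable 0

theorem g_tendsto (k : ℕ) :
    Filter.Tendsto (fun y : ℝ => y ^ k * gaussD y) Filter.atTop (nhds 0) := by
  have h := (((rpow_mul_exp_neg_mul_sq_isLittleO_exp_neg (b := 1 / 2) (by norm_num)
    (k : ℝ)).tendsto_zero_of_tendsto
      (Real.tendsto_exp_atBot.comp <| Filter.tendsto_id.const_mul_atTop_of_neg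
        (neg_lt_zero.mpr one_half_pos)))).const_mul ((Real.sqrt (2 * Real.pi))⁻¹)
  rw [mul_zero] at h
  refine h.congr fun y => ?_
  simp only [Real.rpow_natCast, gaussD]
  rw [show -(1 / 2 : ℝ) * y ^ 2 = -(y ^ 2) / 2 by ring]
  ring

/-- Tail absolute moments. -/
noncomputable def gI (k : ℕ) (a : ℝ) : ℝ := ∫ y in Set.Ioi a, |y| ^ k * gaussD y

/-- Total absolute moments. -/
noncomputable def gM (k : ℕ) : ℝ := ∫ y, |y| ^ k * gaussD y

theorem gI_nonneg (k : ℕ) (a : ℝ) : 0 ≤ gI k a :=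
  integral_nonneg fun y => mul_nonneg (by positivity) (gD_pos y).le

theorem gM_nonneg (k : ℕ) : 0 ≤ gM k :=
  integral_nonneg fun y => mul_nonneg (by positivity) (gD_pos y).le

theorem gM_eq (k : ℕ) : gM k = 2 * gI k 0 := by
  unfold gM gI
  rw [← integral_comp_abs (f := fun y => |y| ^ k * gaussD y)]
  congr 1
  ext y
  rcases abs_choice y with h | h <;> simp [h, gD_neg]

theorem gI_rec (k : ℕ) (a : ℝ) (ha : 0 ≤ a) :
    gI (k + 2) a = a ^ (k + 1) * gaussD a + (k + 1) * gI k a := by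
  have hd : ∀ x ∈ Set.Ici a, HasDerivAt (fun y : ℝ => -(y ^ (k + 1) * gaussD y))
      (|x| ^ (k + 2) * gaussD x - (k + 1) * (|x| ^ k * gaussD x)) x := by
    intro x hx
    have hx0 : 0 ≤ x := ha.trans hx
    rw [abs_of_nonneg hx0]
    have := ((hasDerivAt_pow (k + 1) x).mul (gD_deriv x)).neg
    refine this.congr_deriv ?_
    simp
    ring
  have hi := ((gM_integrable (k + 2)).sub ((gM_integrable k).const_mul ((k : ℝ) + 1)))
  have h := integral_Ioi_of_hasDerivAt_of_tendsto' hd hi.integrableOn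
    (by simpa using (g_tendsto (k + 1)).neg)
  rw [integral_sub (gM_integrable _).integrableOn
    ((gM_integrable k).const_mul ((k : ℝ) + 1)).integrableOn, integral_const_mul] at h
  unfold gI
  linarith

theorem gI_one (a : ℝ) (ha : 0 ≤ a) : gI 1 a = gaussD a := by
  have hd : ∀ x ∈ Set.Ici a, HasDerivAt (fun y : ℝ => -(gaussD y)) (|x| ^ 1 * gaussD x) x := by
    intro x hx
    have hx0 : 0 ≤ x := ha.trans hx
    rw [abs_of_nonneg hx0]
    refine (gD_deriv x).neg.congr_deriv ?_
    ring
  have h := integral_Ioi_of_hasDerivAt_of_tendsto' hd (gM_integrable 1).integrableOn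
    (by simpa using (g_tendsto 0).neg)
  unfold gI
  linarith

theorem gI_zero_zero : gI 0 0 = 1 / 2 := by
  unfold gI gaussD
  simp only [pow_zero, one_mul]
  rw [integral_const_mul]
  have h := integral_gaussian_Ioi (1 / 2)
  have e : (fun y : ℝ => Real.exp (-(y ^ 2) / 2)) = fun y => Real.exp (-(1 / 2) * y ^ 2) := by
    ext y
    congr 1
    ring
  rw [e, h]
  have hp : (0 : ℝ) < Real.sqrt (2 * Real.pi) := Real.sqrt_pos.mpr (by positivity)
  rw [show Real.pi / (1 / 2) = 2 * Real.pi by ring]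
  field_simp

theorem gM_zero : gM 0 = 1 := by rw [gM_eq, gI_zero_zero]; norm_num

theorem gM_one : gM 1 = 2 * gaussD 0 := by rw [gM_eq, gI_one 0 le_rfl]

theorem gM_rec (k : ℕ) : gM (k + 2) = (k + 1) * gM k := by
  rw [gM_eq, gM_eq, gI_rec k 0 le_rfl]
  simp
  ring

theorem gI_le_gM (k : ℕ) (a : ℝ) : gI k a ≤ gM k :=
  setIntegral_le_integral (gM_integrable k)
    (Filter.Eventually.of_forall fun y => mul_nonneg (by positivity) (gD_pos y).le)

theorem gI_mills (a : ℝ) (ha : 0 ≤ a) : a * gI 0 a ≤ gaussD a := by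
  rw [← gI_one a ha]
  unfold gI
  rw [← integral_const_mul]
  refine setIntegral_mono_on ((gM_integrable 0).const_mul a).integrableOn
    (gM_integrable 1).integrableOn measurableSet_Ioi fun y hy => ?_
  have hy' : a < y := hy
  rw [abs_of_nonneg (ha.trans hy'.le)]
  nlinarith [gD_pos y]

theorem gD_add (t a : ℝ) (ht : 0 ≤ t) (ha : 0 ≤ a) :
    gaussD 0 * gaussD (t + a) ≤ gaussD a * gaussD t := by
  unfold gaussD
  set c := (Real.sqrt (2 * Real.pi))⁻¹
  have hc : 0 ≤ c := by positivity
  have h : Real.exp (-(0 : ℝ) ^ 2 / 2) * Real.exp (-(t + a) ^ 2 / 2) ≤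
      Real.exp (-a ^ 2 / 2) * Real.exp (-t ^ 2 / 2) := by
    rw [← Real.exp_add, ← Real.exp_add]
    apply Real.exp_le_exp.mpr
    nlinarith [mul_nonneg ht ha]
  nlinarith [mul_le_mul_of_nonneg_left h (mul_nonneg hc hc)]

theorem gI_tail (a : ℝ) (ha : 0 ≤ a) : gI 0 a * (2 * gaussD 0) ≤ gaussD a := by
  have e : gI 0 a = ∫ t in Set.Ioi (0 : ℝ), gaussD (t + a) := by
    have := (measurePreserving_add_right volume a).setIntegral_preimage_emb
      (measurableEmbedding_addRight a) gaussD (Set.Ioi a)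
    simp only [Set.preimage_add_const_Ioi, sub_self] at this
    rw [this]
    simp [gI]
  have h : gaussD 0 * gI 0 a ≤ gaussD a * gI 0 0 := by
    rw [e]
    unfold gI
    rw [← integral_const_mul, ← integral_const_mul]
    refine setIntegral_mono_on ((gD_integrable.comp_add_right a).const_mul _).integrableOn
      ((gM_integrable 0).const_mul _).integrableOn measurableSet_Ioi fun y hy => ?_
    simpa using gD_add y a (le_of_lt hy) ha
  rw [gI_zero_zero] at h
  linarith

theorem gI_var (a : ℝ) (ha : 0 ≤ a) : gI 0 a * (1 - gI 0 a) ≤ gaussD a := by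
  set F : ℝ → ℝ := fun x => ∫ y in (0 : ℝ)..x, gaussD y with hF
  have hFd : ∀ x, HasDerivAt F (gaussD x) x := fun x =>
    intervalIntegral.integral_hasDerivAt_right (gD_cont.intervalIntegrable _ _)
      (gD_cont.stronglyMeasurableAtFilter _ _) gD_cont.continuousAt
  have hI0 : ∀ x, gI 0 x = ∫ y in Set.Ioi x, gaussD y := fun x => by simp [gI]
  have hFI : ∀ x, F x + gI 0 x = 1 / 2 := fun x => by
    rw [← gI_zero_zero, hI0, hI0]
    exact intervalIntegral.integral_interval_add_Ioi gD_integrable.integrableOn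
      gD_integrable.integrableOn
  have hlim : Filter.Tendsto F Filter.atTop (nhds (1 / 2)) := by
    rw [← gI_zero_zero, hI0]
    exact intervalIntegral_tendsto_integral_Ioi 0 gD_integrable.integrableOn Filter.tendsto_id
  have hFle : ∀ x, 0 ≤ x → F x ≤ x / 2 := fun x hx => by
    have : F x ≤ ∫ y in (0 : ℝ)..x, (1 / 2 : ℝ) :=
      intervalIntegral.integral_mono_on hx (gD_cont.intervalIntegrable _ _)
        (by simp) (fun y _ => (gD_le_zero y).trans gD_zero_le)
    simp at this
    linarith
  set h : ℝ → ℝ := fun x => 1 / 4 - F x ^ 2 - gaussD x with hh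
  have hd : ∀ x, HasDerivAt h (gaussD x * (x - 2 * F x)) x := fun x => by
    have := (((hFd x).pow 2).const_sub (1 / 4)).sub (gD_deriv x)
    refine this.congr_deriv ?_
    simp
    ring
  have hmono : MonotoneOn h (Set.Ici 0) := by
    refine monotoneOn_of_deriv_nonneg (convex_Ici 0)
      (fun x _ => (hd x).continuousAt.continuousWithinAt)
      (fun x _ => (hd x).differentiableAt.differentiableWithinAt) fun x hx => ?_
    rw [(hd x).deriv]
    rw [interior_Ici] at hx
    have := hFle x (le_of_lt hx)
    exact mul_nonneg (gD_pos x).le (by linarith)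
  have hl : Filter.Tendsto h Filter.atTop (nhds 0) := by
    have := ((hlim.pow 2).const_sub (1 / 4)).sub (g_tendsto 0)
    norm_num at this
    simpa [hh] using this
  have hfin : h a ≤ 0 := by
    refine ge_of_tendsto hl ?_
    filter_upwards [Filter.eventually_ge_atTop a] with x hx
    exact hmono ha (ha.trans hx) hx
  have e := hFI a
  simp only [hh] at hfin
  have e2 : gI 0 a = 1 / 2 - F a := by linarith
  rw [e2]
  linarith

theorem eta_zero (a : ℝ) : eta 0 a = 1 := by simp [eta]

theorem eta_one (a : ℝ) : eta 1 a = 1 := by simp [eta]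

theorem prod_shift (k n : ℕ) : ∏ j ∈ Finset.Icc 1 (n + 1), (((k + 2 : ℕ) : ℝ) + 1 - 2 * (j : ℝ))
    = (k + 1) * ∏ j ∈ Finset.Icc 1 n, ((k : ℝ) + 1 - 2 * (j : ℝ)) := by
  induction n with
  | zero => simp; ring
  | succ n ih =>
    rw [Finset.prod_Icc_succ_top (by omega), ih, Finset.prod_Icc_succ_top (by omega)]
    push_cast
    ring

theorem sum_shift (k n : ℕ) (a : ℝ) : ∑ i ∈ Finset.Icc 1 (n + 1),
      a ^ (k + 2 + 1 - 2 * i) * ∏ j ∈ Finset.Icc 1 (i - 1), (((k + 2 : ℕ) : ℝ) + 1 - 2 * (j : ℝ))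
    = a ^ (k + 1) + (k + 1) * ∑ i ∈ Finset.Icc 1 n,
      a ^ (k + 1 - 2 * i) * ∏ j ∈ Finset.Icc 1 (i - 1), ((k : ℝ) + 1 - 2 * (j : ℝ)) := by
  induction n with
  | zero => simp
  | succ n ih =>
    rw [Finset.sum_Icc_succ_top (by omega), ih, Finset.sum_Icc_succ_top (by omega)]
    rw [show n + 1 + 1 - 1 = n + 1 by omega, prod_shift,
      show k + 2 + 1 - 2 * (n + 1 + 1) = k + 1 - 2 * (n + 1) by omega,
      show n + 1 - 1 = n by omega]
    ring

theorem eta_rec (k : ℕ) (a : ℝ) : eta (k + 2) a = a ^ (k + 1) + (k + 1) * eta k a := by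
  unfold eta
  rw [show (k + 2) / 2 = k / 2 + 1 by omega, sum_shift, prod_shift]
  ring

theorem eta_nonneg (k : ℕ) (a : ℝ) (ha : 0 ≤ a) : 0 ≤ eta k a := by
  induction k using Nat.twoStepInduction with
  | zero => simp [eta_zero]
  | one => simp [eta_one]
  | more k ih _ =>
    rw [eta_rec]
    positivity

theorem L2 (k : ℕ) (a : ℝ) (ha : 0 ≤ a) : (1 - gI 0 a) * gI k a ≤ gaussD a * eta k a := by
  have h1 := gI_le_gM 0 a
  rw [gM_zero] at h1
  have h0 := gI_nonneg 0 a
  have hg := gD_pos a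
  induction k using Nat.twoStepInduction with
  | zero => rw [eta_zero]; linarith [gI_var a ha]
  | one => rw [eta_one, gI_one a ha]; nlinarith
  | more k ih _ =>
    rw [eta_rec, gI_rec k a ha]
    have hp : 0 ≤ a ^ (k + 1) * gaussD a * gI 0 a := by positivity
    have hk : (0 : ℝ) ≤ k + 1 := by positivity
    nlinarith [mul_le_mul_of_nonneg_left ih hk]

theorem L1 (k : ℕ) (a : ℝ) (ha : 0 ≤ a) : gI 0 a * (gM k - gI k a) ≤ gaussD a * eta k a := by
  have h0 := gI_nonneg 0 a
  have hg := gD_pos a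
  induction k using Nat.twoStepInduction with
  | zero => rw [eta_zero, gM_zero]; linarith [gI_var a ha]
  | one => rw [eta_one, gI_one a ha, gM_one]; nlinarith [gI_tail a ha]
  | more k ih _ =>
    rw [eta_rec, gI_rec k a ha, gM_rec]
    have hp : 0 ≤ a ^ (k + 1) * gaussD a * gI 0 a := by positivity
    have hp2 : 0 ≤ a ^ (k + 1) * gaussD a := by positivity
    have hk : (0 : ℝ) ≤ k + 1 := by positivity
    nlinarith [mul_le_mul_of_nonneg_left ih hk]

theorem pow_le_eta (k : ℕ) (a : ℝ) (ha : 0 ≤ a) : a ^ k ≤ a * eta k a + gM k := by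
  match k with
  | 0 => rw [gM_zero, eta_zero]; simp [ha]
  | 1 => rw [eta_one]; simpa using gM_nonneg 1
  | k + 2 =>
    rw [eta_rec]
    have := gM_nonneg (k + 2)
    have h2 : 0 ≤ a * ((k + 1) * eta k a) :=
      mul_nonneg ha (mul_nonneg (by positivity) (eta_nonneg k a ha))
    have : a ^ (k + 2) = a * a ^ (k + 1) := by ring
    linarith

theorem qint (q : ℝ → ℝ) (hm : Measurable q) (hq : ∀ x, q x ∈ Set.Icc (0 : ℝ) 1) (k : ℕ) :
    Integrable (fun y => |y| ^ k * q y * gaussD y) := by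
  refine (gM_integrable k).mono' ?_ (Filter.Eventually.of_forall fun y => ?_)
  · have := gD_cont.measurable
    exact (by fun_prop : Measurable fun y => |y| ^ k * q y * gaussD y).aestronglyMeasurable
  · have h1 := (hq y).1
    have h2 := (hq y).2
    have h3 := gD_pos y
    rw [Real.norm_of_nonneg (by positivity)]
    have : 0 ≤ |y| ^ k * gaussD y := by positivity
    nlinarith

theorem main_pos (q : ℝ → ℝ) (hm : Measurable q) (hq : ∀ x, q x ∈ Set.Icc (0 : ℝ) 1) (k : ℕ)
    (a : ℝ) (ha : 0 ≤ a) : |steinF q k a| ≤ eta k a ∧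
      |steinF' q k a| ≤ a * eta k a + gM k := by
  have hi := qint q hm hq k
  have hg := gD_pos a
  have hle : ∀ y, |y| ^ k * q y * gaussD y ≤ |y| ^ k * gaussD y := fun y => by
    have h2 := (hq y).2
    have h3 := gD_pos y
    have : 0 ≤ |y| ^ k * gaussD y := by positivity
    nlinarith
  have hnn : ∀ y, 0 ≤ |y| ^ k * q y * gaussD y := fun y => by
    have h1 := (hq y).1
    have h3 := gD_pos y
    positivity
  obtain ⟨A, hA⟩ : ∃ A, A = ∫ y in Set.Iic a, |y| ^ k * q y * gaussD y := ⟨_, rfl⟩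
  obtain ⟨B, hB⟩ : ∃ B, B = ∫ y in Set.Ioi a, |y| ^ k * q y * gaussD y := ⟨_, rfl⟩
  have hP : PhiInt (fun v => |v| ^ k * q v) = A + B := by
    rw [hA, hB, intervalIntegral.integral_Iic_add_Ioi hi.integrableOn hi.integrableOn]
    rfl
  have hA0 : 0 ≤ A := by rw [hA]; exact integral_nonneg hnn
  have hB0 : 0 ≤ B := by rw [hB]; exact integral_nonneg hnn
  have hB1 : B ≤ gI k a := by
    rw [hB]
    exact setIntegral_mono hi.integrableOn (gM_integrable k).integrableOn hle
  have split : ∀ j, (∫ y in Set.Iic a, |y| ^ j * gaussD y) = gM j - gI j a := fun j => by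
    have := intervalIntegral.integral_Iic_add_Ioi (b := a) (gM_integrable j).integrableOn
      (gM_integrable j).integrableOn
    unfold gM gI
    linarith
  have hA1 : A ≤ gM k - gI k a := by
    rw [hA, ← split]
    exact setIntegral_mono hi.integrableOn (gM_integrable k).integrableOn hle
  have h0 := gI_nonneg 0 a
  have h1 := gI_le_gM 0 a
  rw [gM_zero] at h1
  have hf : gaussD a * steinF q k a = gI 0 a * A - (1 - gI 0 a) * B := by
    unfold steinF
    rw [hP, ← mul_assoc, mul_inv_cancel₀ hg.ne', one_mul]
    simp only [sub_mul]
    rw [integral_sub hi.integrableOn (gD_integrable.const_mul _).integrableOn, integral_const_mul,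
      ← hA]
    have := split 0
    simp only [pow_zero, one_mul, gM_zero] at this
    rw [this]
    ring
  have hL1 : gI 0 a * A ≤ gaussD a * eta k a :=
    (mul_le_mul_of_nonneg_left hA1 h0).trans (L1 k a ha)
  have hL2 : (1 - gI 0 a) * B ≤ gaussD a * eta k a :=
    (mul_le_mul_of_nonneg_left hB1 (by linarith)).trans (L2 k a ha)
  have p1 := mul_nonneg h0 hA0
  have p2 : 0 ≤ (1 - gI 0 a) * B := mul_nonneg (by linarith) hB0
  have bd : |steinF q k a| ≤ eta k a := by
    rw [abs_le]
    constructor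
    · refine le_of_mul_le_mul_left ?_ hg
      linarith
    · refine le_of_mul_le_mul_left ?_ hg
      linarith
  refine ⟨bd, ?_⟩
  unfold steinF'
  rw [hP, abs_of_nonneg ha]
  have hq0 := (hq a).1
  have hq1 := (hq a).2
  have hak : 0 ≤ a ^ k := by positivity
  have hq2 : 0 ≤ a ^ k * q a := by positivity
  have hq3 : a ^ k * q a ≤ a ^ k := by nlinarith
  rw [abs_le] at bd ⊢
  constructor
  · nlinarith [mul_le_mul_of_nonneg_left bd.1 ha]
  · have key : a * steinF q k a ≤ A := by
      refine le_of_mul_le_mul_left ?_ hg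
      have m := mul_le_mul_of_nonneg_right (gI_mills a ha) hA0
      have : gaussD a * (a * steinF q k a) = a * (gI 0 a * A - (1 - gI 0 a) * B) := by
        rw [← hf]; ring
      nlinarith [mul_nonneg ha p2]
    linarith [pow_le_eta k a ha]

theorem Phi_neg (q : ℝ → ℝ) (k : ℕ) :
    PhiInt (fun v => |v| ^ k * q (-v)) = PhiInt (fun v => |v| ^ k * q v) := by
  unfold PhiInt
  rw [← integral_neg_eq_self (fun x => |x| ^ k * q x * gaussD x)]
  simp [gD_neg]

theorem gM_total : (∫ y, gaussD y) = 1 := by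
  have := gM_zero
  simpa [gM] using this

theorem stein_neg (q : ℝ → ℝ) (hm : Measurable q) (hq : ∀ x, q x ∈ Set.Icc (0 : ℝ) 1) (k : ℕ)
    (x : ℝ) : steinF (fun y => q (-y)) k (-x) = - steinF q k x := by
  unfold steinF
  rw [Phi_neg, gD_neg]
  obtain ⟨c, hc⟩ : ∃ c, c = PhiInt (fun v => |v| ^ k * q v) := ⟨_, rfl⟩
  rw [← hc]
  have e := integral_comp_neg_Iic (-x) (fun y => (|y| ^ k * q y - c) * gaussD y)
  simp only [abs_neg, gD_neg, neg_neg] at e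
  rw [e]
  have hi : Integrable (fun y => (|y| ^ k * q y - c) * gaussD y) := by
    simp only [sub_mul]
    exact (qint q hm hq k).sub (gD_integrable.const_mul c)
  have s := intervalIntegral.integral_Iic_add_Ioi (b := x) hi.integrableOn hi.integrableOn
  have z : (∫ y, (|y| ^ k * q y - c) * gaussD y) = 0 := by
    simp only [sub_mul]
    rw [integral_sub (qint q hm hq k) (gD_integrable.const_mul c), integral_const_mul, gM_total,
      hc]
    simp [PhiInt]
  rw [z] at s
  rw [← mul_neg]
  congr 1
  linarith

/-- for `q ∈ ℋ` and `k ∈ ℕ₀`, `|f_k(x)| ≤ η_k(|x|)` and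
`|f_k'(x)| ≤ |x|·η_k(|x|) + ∫ |y|^k ψ(y) dy`. -/
theorem stein_solution_eta_bounds (q : ℝ → ℝ) (hq : memH q) (k : ℕ) :
    (∀ x : ℝ, |steinF q k x| ≤ eta k |x|) ∧
    (∀ x : ℝ, |steinF' q k x| ≤ |x| * eta k |x| + ∫ y, |y| ^ k * gaussD y) := by
  have hm : Measurable q := hq.2.1.measurable
  have h : ∀ x : ℝ, |steinF q k x| ≤ eta k |x| ∧
      |steinF' q k x| ≤ |x| * eta k |x| + ∫ y, |y| ^ k * gaussD y := by
    intro x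
    rcases le_total 0 x with hx | hx
    · rw [abs_of_nonneg hx]
      exact main_pos q hm hq.1 k x hx
    · have m := main_pos (fun y => q (-y)) (hm.comp measurable_neg) (fun y => hq.1 (-y)) k (-x)
        (by linarith)
      have e : steinF' (fun y => q (-y)) k (-x) = steinF' q k x := by
        unfold steinF'
        rw [stein_neg q hm hq.1, Phi_neg]
        simp
      rw [e, stein_neg q hm hq.1, abs_neg] at m
      rw [abs_of_nonpos hx]
      exact m
  exact ⟨fun x => (h x).1, fun x => (h x).2⟩
end

section
/- Let k ∈ ℕ, λ > 0, and let F : ℝ → ℝ be a function such that there exists a constant C > 0 with |F(x) − P_λ^k(x;z,F)| ≤ C(λ^{k+1} + (x−z)^{k+1}) for all z ∈ ℝ and all z ≤ x ≤ z + (k+1)λ. Then for all 0 ≤ y ≤ λ: ‖Δ_y^{k+1}F‖ ≤ D·(λ^{k+1} + y^{k+1}), where D = C·(1 + Σ_{j=1}^{k+1} binom(k+1, j)·j^{k+1}). -/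
open Finset

/-- `k`-th iterated difference `Δ_y^k G`. -/
noncomputable def Δiter (y : ℝ) (k : ℕ) (G : ℝ → ℝ) : ℝ → ℝ :=
  (fun (G : ℝ → ℝ) (z : ℝ) => G (z + y) - G z)^[k] G

/-- The interpolating polynomial `P_y^k(x; z, F)` of `F` at the points `z, z+y, …, z+ky`. -/
noncomputable def interp (y : ℝ) (k : ℕ) (z : ℝ) (F : ℝ → ℝ) (x : ℝ) : ℝ :=
  F z + ∑ s ∈ Finset.Icc 1 k,
    Δiter y s F z * ∏ i ∈ Finset.Icc 1 s, (x - z - ((i : ℝ) - 1) * y) / ((i : ℝ) * y)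

lemma interp_poly (lam y z : ℝ) (k : ℕ) (F : ℝ → ℝ) :
    ∃ Q : Polynomial ℝ, Q.natDegree ≤ k ∧ ∀ t : ℝ, Q.eval t = interp lam k z F (z + t * y) := by
  refine ⟨Polynomial.C (F z) + ∑ s ∈ Finset.Icc 1 k, Polynomial.C (Δiter lam s F z) *
    ∏ i ∈ Finset.Icc 1 s, (Polynomial.C (y / ((i : ℝ) * lam)) * Polynomial.X
      + Polynomial.C (-(((i : ℝ) - 1) * lam) / ((i : ℝ) * lam))), ?_, ?_⟩
  · refine (Polynomial.natDegree_add_le _ _).trans (max_le (by simp) ?_)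
    refine Polynomial.natDegree_sum_le_of_forall_le _ _ fun s hs => ?_
    refine (Polynomial.natDegree_C_mul_le _ _).trans ?_
    refine (Polynomial.natDegree_prod_le _ _).trans ?_
    refine (Finset.sum_le_card_nsmul _ _ 1 fun i _ => Polynomial.natDegree_linear_le).trans ?_
    simpa using (Finset.mem_Icc.mp hs).2
  · intro t
    simp only [interp, Polynomial.eval_add, Polynomial.eval_C, Polynomial.eval_finset_sum,
      Polynomial.eval_mul, Polynomial.eval_prod, Polynomial.eval_X]
    congr 1
    refine Finset.sum_congr rfl fun s _ => ?_
    congr 1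
    refine Finset.prod_congr rfl fun i _ => ?_
    ring

lemma interp_self (lam z : ℝ) (k : ℕ) (F : ℝ → ℝ) : interp lam k z F z = F z := by
  unfold interp
  rw [Finset.sum_eq_zero, add_zero]
  intro s hs
  rw [Finset.prod_eq_zero (i := 1), mul_zero]
  · simpa using (Finset.mem_Icc.mp hs).1
  · simp

/-- if `|F(x) − P_λ^k(x;z,F)| ≤ C(λ^{k+1} + (x−z)^{k+1})` for all `z` and
`z ≤ x ≤ z+(k+1)λ`, then `‖Δ_y^{k+1}F‖ ≤ D(λ^{k+1} + y^{k+1})` for all `0 ≤ y ≤ λ`, where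
`D = C(1 + Σ_{j=1}^{k+1} binom(k+1,j) j^{k+1})`. -/
theorem diff_bound_of_interp_bound (k : ℕ) (hk : 1 ≤ k) (lam : ℝ) (hlam : 0 < lam)
    (F : ℝ → ℝ) (C : ℝ) (hC : 0 < C)
    (h : ∀ z x : ℝ, z ≤ x → x ≤ z + ((k : ℝ) + 1) * lam →
      |F x - interp lam k z F x| ≤ C * (lam ^ (k + 1) + (x - z) ^ (k + 1))) :
    ∀ y : ℝ, 0 ≤ y → y ≤ lam → ∀ z : ℝ,
      |Δiter y (k + 1) F z| ≤
        C * (1 + ∑ j ∈ Finset.Icc 1 (k + 1), ((k + 1).choose j : ℝ) * (j : ℝ) ^ (k + 1)) *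
          (lam ^ (k + 1) + y ^ (k + 1)) := by
  intro y hy hyl z
  obtain ⟨Q, hQ, hQe⟩ := interp_poly lam y z k F
  have h0 := congrFun (Polynomial.fwdDiff_iter_eq_zero_of_degree_lt (Nat.lt_succ_of_le hQ)) 0
  rw [fwdDiff_iter_eq_sum_shift] at h0
  have h1 : Δiter y (k + 1) F z = _ := fwdDiff_iter_eq_sum_shift y F (k + 1) z
  have h2 : Δiter y (k + 1) F z = ∑ j ∈ Finset.range (k + 1 + 1),
      ((-1 : ℤ) ^ (k + 1 - j) * (k + 1).choose j) •
        (F (z + j * y) - interp lam k z F (z + j * y)) := by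
    simp only [smul_sub, Finset.sum_sub_distrib]
    rw [h1]
    simp only [hQe, nsmul_eq_mul, mul_one, zero_add, Pi.zero_apply, Nat.succ_eq_add_one] at h0 ⊢
    rw [h0, sub_zero]
  have h3 : Finset.range (k + 1 + 1) = insert 0 (Finset.Icc 1 (k + 1)) := by
    ext a
    simp only [Finset.mem_range, Finset.mem_insert, Finset.mem_Icc]
    omega
  rw [h2, h3, Finset.sum_insert (by simp)]
  simp only [Nat.cast_zero, zero_mul, add_zero, interp_self, sub_self, smul_zero, zero_add]
  refine (Finset.abs_sum_le_sum_abs _ _).trans ?_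
  have hlp : 0 ≤ lam ^ (k + 1) := by positivity
  have hyp : 0 ≤ y ^ (k + 1) := by positivity
  calc _ ≤ ∑ j ∈ Finset.Icc 1 (k + 1), C * (((k + 1).choose j : ℝ) * (j : ℝ) ^ (k + 1)) *
          (lam ^ (k + 1) + y ^ (k + 1)) := by
        refine Finset.sum_le_sum fun j hj => ?_
        obtain ⟨hj1, hj2⟩ := Finset.mem_Icc.mp hj
        have hj1' : (1 : ℝ) ≤ j := by exact_mod_cast hj1
        have hj2' : (j : ℝ) ≤ (k : ℝ) + 1 := by exact_mod_cast hj2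
        have hb := h z (z + j * y) (by nlinarith) (by nlinarith)
        rw [add_sub_cancel_left, mul_pow] at hb
        have hjp : (1 : ℝ) ≤ (j : ℝ) ^ (k + 1) := one_le_pow₀ hj1'
        rw [zsmul_eq_mul, abs_mul]
        have hc : |(((-1 : ℤ) ^ (k + 1 - j) * (k + 1).choose j : ℤ) : ℝ)|
            = ((k + 1).choose j : ℝ) := by
          push_cast
          rw [abs_mul, abs_pow]
          simp
        rw [hc]
        have hb2 : C * (lam ^ (k + 1) + (j : ℝ) ^ (k + 1) * y ^ (k + 1)) ≤
            C * ((j : ℝ) ^ (k + 1) * (lam ^ (k + 1) + y ^ (k + 1))) := by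
          refine mul_le_mul_of_nonneg_left ?_ hC.le
          nlinarith
        calc _ ≤ ((k + 1).choose j : ℝ) *
              (C * ((j : ℝ) ^ (k + 1) * (lam ^ (k + 1) + y ^ (k + 1)))) :=
              mul_le_mul_of_nonneg_left (hb.trans hb2) (by positivity)
          _ = _ := by ring
    _ = C * (∑ j ∈ Finset.Icc 1 (k + 1), ((k + 1).choose j : ℝ) * (j : ℝ) ^ (k + 1)) *
          (lam ^ (k + 1) + y ^ (k + 1)) := by
        rw [Finset.mul_sum, Finset.sum_mul]
    _ ≤ _ := by
        refine mul_le_mul_of_nonneg_right ?_ (by positivity)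
        refine mul_le_mul_of_nonneg_left ?_ hC.le
        linarith
end

section
/- Let k ∈ ℕ, λ > 0 and F : ℝ → ℝ. (a) If F is (k+1)-times differentiable with ‖F^{(k+1)}‖ < ∞, then |F(x) − P_λ^k(x;z,F)| ≤ (2^k/(k+1))·‖F^{(k+1)}‖·(λ^{k+1} + |x−z|^{k+1}) for all z, x ∈ ℝ. (b) If F is twice differentiable with ‖F'‖ < ∞ and ‖x·F''(x)‖ < ∞, then sup_{z∈ℝ} |z·Δ_y²F(z)| ≤ (4‖F'‖ + ‖x·F''(x)‖)·y² for all y ∈ ℝ. -/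
open Finset

lemma rolle_gen (n : ℕ) : ∀ (g : ℝ → ℝ) (p : Fin (n + 1) → ℝ),
    (∀ j, j < n → Differentiable ℝ (iteratedDeriv j g)) → StrictMono p → (∀ i, g (p i) = 0) →
    ∃ ξ, iteratedDeriv n g ξ = 0 := by
  induction n with
  | zero => intro g p _ _ h0; exact ⟨p 0, by simpa using h0 0⟩
  | succ n ih =>
    intro g p hd hp h0
    have hg : Differentiable ℝ g := by simpa using hd 0 (by omega)
    have key : ∀ i : Fin (n + 1), ∃ c ∈ Set.Ioo (p i.castSucc) (p i.succ), deriv g c = 0 := by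
      intro i
      exact exists_deriv_eq_zero (hp Fin.castSucc_lt_succ) hg.continuous.continuousOn
        (by rw [h0, h0])
    choose q hq hq0 using key
    obtain ⟨ξ, hξ⟩ := ih (deriv g) q (by
        intro j hj
        rw [← iteratedDeriv_succ']
        exact hd (j + 1) (by omega)) (by
        intro i j hij
        calc q i < p i.succ := (hq i).2
          _ ≤ p j.castSucc := hp.monotone (by
              rw [Fin.le_def]; rw [Fin.lt_def] at hij; simp; omega)
          _ < q j := (hq j).1) hq0
    exact ⟨ξ, by rw [iteratedDeriv_succ']; exact hξ⟩

lemma iterDeriv_sub_poly (F : ℝ → ℝ) (Q : Polynomial ℝ) (k : ℕ)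
    (hd : ∀ j, j ≤ k → Differentiable ℝ (iteratedDeriv j F)) (n : ℕ) (hn : n ≤ k + 1) :
    iteratedDeriv n (fun t => F t - Q.eval t) =
      fun t => iteratedDeriv n F t - (Polynomial.derivative^[n] Q).eval t := by
  induction n with
  | zero => ext t; simp
  | succ n ih =>
    rw [iteratedDeriv_succ, ih (by omega)]
    ext t
    rw [iteratedDeriv_succ, Function.iterate_succ_apply']
    rw [deriv_fun_sub (hd n (by omega) t) (Polynomial.differentiable _ t), Polynomial.deriv]

lemma prod_choose (j s : ℕ) :
    ∏ i ∈ Finset.Icc 1 s, ((j : ℝ) - ((i : ℝ) - 1)) / (i : ℝ) = (j.choose s : ℝ) := by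
  induction s with
  | zero => simp
  | succ s ih =>
    rw [Finset.prod_Icc_succ_top (by omega), ih]
    have h := Nat.choose_succ_right_eq j s
    have h' : ((j.choose (s + 1) : ℝ)) * ((s : ℝ) + 1) = (j.choose s : ℝ) * ((j : ℝ) - s) := by
      rcases le_or_gt s j with hs | hs
      · rw [← Nat.cast_sub hs]; exact_mod_cast h
      · simp [Nat.choose_eq_zero_of_lt hs, Nat.choose_eq_zero_of_lt (show j < s + 1 by omega)]
    have : (s : ℝ) + 1 ≠ 0 := by positivity
    push_cast
    field_simp
    linarith

lemma interp_node (y : ℝ) (hy : y ≠ 0) (k : ℕ) (z : ℝ) (F : ℝ → ℝ) (j : ℕ) (hj : j ≤ k) :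
    interp y k z F (z + j * y) = F (z + j * y) := by
  have h := shift_eq_sum_fwdDiff_iter y F j z
  have e : ∀ s, (fwdDiff y)^[s] F z = Δiter y s F z := fun s => rfl
  have h2 : F (z + j * y) = ∑ s ∈ range (k + 1), (j.choose s : ℝ) * Δiter y s F z := by
    rw [nsmul_eq_mul] at h
    rw [h]
    simp only [nsmul_eq_mul, e]
    apply Finset.sum_subset
    · intro a; simp only [mem_range]; omega
    · intro a _ ha
      simp only [mem_range] at ha
      rw [Nat.choose_eq_zero_of_lt (by omega)]; simp
  rw [h2, Finset.range_eq_Ico, Finset.sum_eq_sum_Ico_succ_bot (by omega)]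
  unfold interp
  congr 1
  · simp [Δiter]
  · apply Finset.sum_congr rfl
    intro s _
    rw [mul_comm, ← prod_choose]
    congr 1
    apply Finset.prod_congr rfl
    intro i _
    rw [show z + j * y - z - ((i : ℝ) - 1) * y = ((j : ℝ) - ((i : ℝ) - 1)) * y by ring]
    exact mul_div_mul_right _ _ hy

open Polynomial in
lemma interp_poly_s8 (y : ℝ) (k : ℕ) (z : ℝ) (F : ℝ → ℝ) :
    ∃ P : Polynomial ℝ, P.natDegree ≤ k ∧ ∀ x, P.eval x = interp y k z F x := by
  refine ⟨C (F z) + ∑ s ∈ Finset.Icc 1 k, C (Δiter y s F z) *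
    ∏ i ∈ Finset.Icc 1 s, ((X - C (z + ((i : ℝ) - 1) * y)) * C (((i : ℝ) * y)⁻¹)), ?_, ?_⟩
  · apply (natDegree_add_le _ _).trans
    rw [natDegree_C]
    apply max_le (by omega)
    apply natDegree_sum_le_of_forall_le
    intro s hs
    refine (natDegree_C_mul_le _ _).trans ((natDegree_prod_le _ _).trans ?_)
    calc _ ≤ ∑ i ∈ Finset.Icc 1 s, 1 := by
            apply Finset.sum_le_sum
            intro i _
            exact (natDegree_mul_C_le _ _).trans (natDegree_X_sub_C _).le
      _ ≤ k := by simp at hs ⊢; omega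
  · intro x
    simp only [interp, eval_add, eval_C, eval_finsetSum, eval_mul, eval_prod, eval_sub, eval_X]
    congr 1
    apply Finset.sum_congr rfl; intro s _
    congr 1
    apply Finset.prod_congr rfl; intro i _
    rw [div_eq_mul_inv, sub_sub]

open Polynomial in
lemma monic_iter (W : Polynomial ℝ) (n : ℕ) (hW : W.Monic) (hn : W.natDegree = n) :
    derivative^[n] W = C ((n.factorial : ℕ) : ℝ) := by
  have h : (derivative^[n] W).natDegree ≤ 0 := by
    have := natDegree_iterate_derivative W n
    omega
  rw [eq_C_of_natDegree_le_zero h, coeff_iterate_derivative]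
  have : W.coeff n = 1 := by rw [← hn]; exact hW
  simp [this, Nat.descFactorial_self]

open Polynomial in
lemma interp_err (k : ℕ) (lam : ℝ) (hlam : 0 < lam) (F : ℝ → ℝ)
    (hd : ∀ j : ℕ, j ≤ k → Differentiable ℝ (iteratedDeriv j F)) (z x : ℝ) :
    ∃ ξ, F x - interp lam k z F x = iteratedDeriv (k + 1) F ξ / ((k + 1).factorial : ℝ) *
      ∏ i ∈ range (k + 1), (x - (z + i * lam)) := by
  by_cases hx : ∃ j ≤ k, x = z + (j : ℝ) * lam
  · obtain ⟨j, hj, rfl⟩ := hx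
    refine ⟨0, ?_⟩
    rw [interp_node lam hlam.ne' k z F j hj, Finset.prod_eq_zero (i := j) (by simp; omega) (by ring)]
    simp
  push Not at hx
  obtain ⟨P, hPd, hP⟩ := interp_poly_s8 lam k z F
  set W : Polynomial ℝ := ∏ i ∈ range (k + 1), (X - C (z + (i : ℝ) * lam)) with hWdef
  have hWe : ∀ t, W.eval t = ∏ i ∈ range (k + 1), (t - (z + i * lam)) := by
    intro t; simp [hWdef, eval_prod]
  have hWm : W.Monic := monic_prod_of_monic _ _ (fun i _ => monic_X_sub_C _)
  have hWn : W.natDegree = k + 1 := by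
    rw [hWdef, natDegree_prod_of_monic _ _ (fun i _ => monic_X_sub_C _),
      Finset.sum_congr rfl (fun i _ => natDegree_X_sub_C _)]
    simp
  have hWx : W.eval x ≠ 0 := by
    rw [hWe, Finset.prod_ne_zero_iff]
    intro i hi
    exact sub_ne_zero.2 (hx i (by simp at hi; omega))
  set c : ℝ := (F x - interp lam k z F x) / W.eval x with hc
  have hcW : c * W.eval x = F x - interp lam k z F x := div_mul_cancel₀ _ hWx
  set Q : Polynomial ℝ := P + C c * W with hQ
  set S : Finset ℝ := insert x ((range (k + 1)).image (fun i : ℕ => z + (i : ℝ) * lam)) with hS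
  have hcard : S.card = k + 1 + 1 := by
    rw [hS, Finset.card_insert_of_notMem, Finset.card_image_of_injective, card_range]
    · intro a b hab
      have : (a : ℝ) * lam = b * lam := by simpa using hab
      exact_mod_cast mul_right_cancel₀ hlam.ne' this
    · intro h
      obtain ⟨i, hi, h⟩ := Finset.mem_image.1 h
      exact hx i (by simp at hi; omega) h.symm
  have hzero : ∀ t ∈ S, F t - Q.eval t = 0 := by
    intro t ht
    simp only [hQ, eval_add, eval_mul, eval_C, hP]
    rcases Finset.mem_insert.1 ht with rfl | ht
    · linarith
    · obtain ⟨i, hi, rfl⟩ := Finset.mem_image.1 ht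
      rw [interp_node lam hlam.ne' k z F i (by simp at hi; omega), hWe,
        Finset.prod_eq_zero hi (by ring)]
      ring
  obtain ⟨ξ, hξ⟩ := rolle_gen (k + 1) (fun t => F t - Q.eval t) (S.orderEmbOfFin hcard)
    (by
      intro j hj
      rw [iterDeriv_sub_poly F Q k hd j (by omega)]
      exact (hd j (by omega)).sub (Polynomial.differentiable _))
    (S.orderEmbOfFin hcard).strictMono (fun i => hzero _ (S.orderEmbOfFin_mem hcard i))
  rw [iterDeriv_sub_poly F Q k hd (k + 1) le_rfl, hQ, iterate_map_add derivative,
    iterate_derivative_C_mul, monic_iter W _ hWm hWn,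
    iterate_derivative_eq_zero (by omega)] at hξ
  simp only [zero_add, eval_mul, eval_C] at hξ
  refine ⟨ξ, ?_⟩
  rw [← hWe, ← hcW]
  congr 1
  rw [eq_div_iff (by positivity)]
  linarith

lemma prod_bd (k : ℕ) (lam a : ℝ) (hl : 0 < lam) (ha : 0 ≤ a) :
    ∏ i ∈ range (k + 1), (a + (i : ℝ) * lam) ≤ (k.factorial : ℝ) * (a + lam) ^ (k + 1) := by
  induction k with
  | zero => simp; linarith
  | succ k ih =>
    rw [Finset.prod_range_succ, Nat.factorial_succ, pow_succ]
    push_cast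
    have h2 : a + ((k : ℝ) + 1) * lam ≤ ((k : ℝ) + 1) * (a + lam) := by
      have : 0 ≤ (k : ℝ) * a := by positivity
      nlinarith
    calc _ ≤ ((k.factorial : ℝ) * (a + lam) ^ (k + 1)) * (((k : ℝ) + 1) * (a + lam)) := by
          apply mul_le_mul ih h2 <;> positivity
      _ = _ := by ring

lemma lip_of_deriv (f : ℝ → ℝ) (hf : Differentiable ℝ f) (C : ℝ) (h : ∀ x, |deriv f x| ≤ C)
    (a b : ℝ) : |f b - f a| ≤ C * |b - a| :=
  convex_univ.norm_image_sub_le_of_norm_deriv_le (fun x _ => hf x) (fun x _ => h x)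
    (Set.mem_univ a) (Set.mem_univ b)

lemma second_diff (G : ℝ → ℝ) (h1 : Differentiable ℝ G) (h2 : Differentiable ℝ (deriv G)) (C : ℝ)
    (h : ∀ x, |deriv (deriv G) x| ≤ C) (y z : ℝ) :
    |G (z + 2 * y) - 2 * G (z + y) + G z| ≤ C * y ^ 2 := by
  have hd : ∀ t, HasDerivAt (fun t => G (t + y) - G t) (deriv G (t + y) - deriv G t) t := by
    intro t
    exact ((h1 (t + y)).hasDerivAt.comp_add_const t y).sub (h1 t).hasDerivAt
  have := lip_of_deriv (fun t => G (t + y) - G t) (fun t => (hd t).differentiableAt) (C * |y|)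
    (by
      intro t
      rw [(hd t).deriv]
      simpa using lip_of_deriv (deriv G) h2 C h t (t + y)) z (z + y)
  simp only [add_sub_cancel_left] at this
  rw [mul_assoc, abs_mul_abs_self, ← sq] at this
  convert this using 2
  rw [show z + y + y = z + 2 * y by ring]
  ring

/-- (a) interpolation-error bound for `(k+1)`-times differentiable `F` with
bounded `(k+1)`-st derivative; (b) bound on `z·Δ_y²F(z)` for twice differentiable `F` with
bounded `F'` and bounded `x·F''(x)`. -/
theorem interp_error_and_weighted_second_diff (k : ℕ) (hk : 1 ≤ k) (lam : ℝ) (hlam : 0 < lam) :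
    (∀ F : ℝ → ℝ,
      (∀ j : ℕ, j ≤ k → Differentiable ℝ (iteratedDeriv j F)) →
      ∀ M : ℝ, (∀ x, |iteratedDeriv (k + 1) F x| ≤ M) →
      ∀ z x : ℝ,
        |F x - interp lam k z F x| ≤
          (2 : ℝ) ^ k / ((k : ℝ) + 1) * M * (lam ^ (k + 1) + |x - z| ^ (k + 1))) ∧
    (∀ F : ℝ → ℝ, Differentiable ℝ F → Differentiable ℝ (deriv F) →
      ∀ M' M'' : ℝ,
        (∀ x, |deriv F x| ≤ M') → (∀ x, |x * deriv (deriv F) x| ≤ M'') →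
        ∀ y z : ℝ, |z * Δiter y 2 F z| ≤ (4 * M' + M'') * y ^ 2) := by
  constructor
  · intro F hd M hM z x
    obtain ⟨ξ, hξ⟩ := interp_err k lam hlam F hd z x
    have hM0 : 0 ≤ M := (abs_nonneg _).trans (hM 0)
    have hprod : |∏ i ∈ range (k + 1), (x - (z + (i : ℝ) * lam))| ≤
        (k.factorial : ℝ) * (2 ^ k * (lam ^ (k + 1) + |x - z| ^ (k + 1))) := by
      rw [Finset.abs_prod]
      calc _ ≤ ∏ i ∈ range (k + 1), (|x - z| + (i : ℝ) * lam) := by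
            apply Finset.prod_le_prod (fun _ _ => abs_nonneg _)
            intro i _
            rw [← sub_sub]
            refine (abs_sub _ _).trans ?_
            rw [abs_of_nonneg (show 0 ≤ (i : ℝ) * lam by positivity)]
        _ ≤ _ := prod_bd k lam _ hlam (abs_nonneg _)
        _ ≤ _ := by
            gcongr
            have := add_pow_le (abs_nonneg (x - z)) hlam.le (k + 1)
            rw [add_comm (lam ^ _)]
            simpa using this
    rw [hξ, abs_mul, abs_div, Nat.abs_cast]
    calc _ ≤ M / ((k + 1).factorial : ℝ) *
          ((k.factorial : ℝ) * (2 ^ k * (lam ^ (k + 1) + |x - z| ^ (k + 1)))) := by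
          gcongr
          exact hM ξ
      _ = _ := by
          rw [Nat.factorial_succ]
          push_cast
          have : (k.factorial : ℝ) ≠ 0 := by positivity
          have : (k : ℝ) + 1 ≠ 0 := by positivity
          field_simp
  · intro F h1 h2 M' M'' hM' hM'' y z
    have hG : ∀ t, HasDerivAt (fun t => t * F t) (F t + t * deriv F t) t := by
      intro t
      have := (hasDerivAt_id' t).fun_mul (h1 t).hasDerivAt
      rwa [one_mul] at this
    have hG' : deriv (fun t => t * F t) = fun t => F t + t * deriv F t :=
      funext fun t => (hG t).deriv
    have hGG : ∀ t, HasDerivAt (fun t => F t + t * deriv F t)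
        (2 * deriv F t + t * deriv (deriv F) t) t := by
      intro t
      have := (h1 t).hasDerivAt.fun_add ((hasDerivAt_id' t).fun_mul (h2 t).hasDerivAt)
      rwa [show deriv F t + (1 * deriv F t + t * deriv (deriv F) t) =
        2 * deriv F t + t * deriv (deriv F) t by ring] at this
    have h := second_diff (fun t => t * F t) (fun t => (hG t).differentiableAt)
      (by rw [hG']; exact fun t => (hGG t).differentiableAt) (2 * M' + M'') (by
        intro t
        rw [hG', (hGG t).deriv]
        refine (abs_add_le _ _).trans ?_
        rw [abs_mul, abs_two]
        linarith [hM' t, hM'' t]) y z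
    have hl := lip_of_deriv F h1 M' hM' (z + y) (z + 2 * y)
    rw [show z + 2 * y - (z + y) = y by ring] at hl
    have e : z * Δiter y 2 F z = ((z + 2 * y) * F (z + 2 * y) - 2 * ((z + y) * F (z + y)) + z * F z)
        - 2 * y * (F (z + 2 * y) - F (z + y)) := by
      simp only [Δiter, Function.iterate_succ, Function.iterate_zero, Function.comp, id]
      rw [show z + y + y = z + 2 * y by ring]
      ring
    have h3 : |2 * y * (F (z + 2 * y) - F (z + y))| ≤ 2 * M' * y ^ 2 := by
      rw [abs_mul, abs_mul, abs_two, ← sq_abs y]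
      nlinarith [abs_nonneg y, mul_le_mul_of_nonneg_left hl (abs_nonneg y)]
    rw [e]
    refine (abs_sub _ _).trans ?_
    linarith
end

section
/- (a) For n ≥ 3: E(𝒯_A³) = (n/((n−1)(n−2))) · Σ_{i,j=1}^{n} â_{ij}³. (b) For n ≥ 4: E(𝒯_A⁴) = 3·(n²−3n+1)(n−1)/(n(n−2)(n−3)) − (3/((n−2)(n−3)))·Σ_{i,j,k=1}^{n}(â_{ij}²â_{ik}² + â_{ij}²â_{kj}²) + (n(n+1)/((n−1)(n−2)(n−3)))·Σ_{i,j=1}^{n} â_{ij}⁴ + (6/(n(n−1)(n−2)(n−3)))·Σ_{i,j,k,h=1}^{n} â_{ik}â_{ih}â_{jk}â_{jh}. -/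
open Finset MeasureTheory

/-- Distribution function of the standard normal distribution. -/
noncomputable def gaussCDF (x : ℝ) : ℝ := ∫ t in Set.Iic x, gaussD t

section RankDefs

variable {m : ℕ}

/-- Row mean `a_{i·}`. -/
noncomputable def rowMean (A : Matrix (Fin m) (Fin m) ℝ) (i : Fin m) : ℝ := (∑ j, A i j) / (m : ℝ)

/-- Column mean `a_{·j}`. -/
noncomputable def colMean (A : Matrix (Fin m) (Fin m) ℝ) (j : Fin m) : ℝ := (∑ i, A i j) / (m : ℝ)

/-- Grand mean `a_{··}`. -/
noncomputable def totMean (A : Matrix (Fin m) (Fin m) ℝ) : ℝ := (∑ i, ∑ j, A i j) / (m : ℝ) ^ 2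

/-- Centered entries `a_{ij} − a_{i·} − a_{·j} + a_{··}`. -/
noncomputable def ctr (A : Matrix (Fin m) (Fin m) ℝ) (i j : Fin m) : ℝ :=
  A i j - rowMean A i - colMean A j + totMean A

/-- `σ_A²`. -/
noncomputable def sigma2 (A : Matrix (Fin m) (Fin m) ℝ) : ℝ :=
  (∑ i, ∑ j, ctr A i j ^ 2) / ((m : ℝ) - 1)

/-- `σ_A`. -/
noncomputable def sdev (A : Matrix (Fin m) (Fin m) ℝ) : ℝ := Real.sqrt (sigma2 A)

/-- Standardized matrix `Â = (â_{ij})`. -/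
noncomputable def hatM (A : Matrix (Fin m) (Fin m) ℝ) : Matrix (Fin m) (Fin m) ℝ :=
  fun i j => ctr A i j / sdev A

/-- `μ_A = n·a_{··}`. -/
noncomputable def muM (A : Matrix (Fin m) (Fin m) ℝ) : ℝ := (m : ℝ) * totMean A

/-- The linear rank statistic `T_A(π) = Σ_i a_{iπ(i)}`. -/
noncomputable def rankT (A : Matrix (Fin m) (Fin m) ℝ) (π : Equiv.Perm (Fin m)) : ℝ :=
  ∑ i, A i (π i)

/-- Expectation with respect to the uniform distribution on permutations. -/
noncomputable def permExp (f : Equiv.Perm (Fin m) → ℝ) : ℝ :=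
  (∑ π : Equiv.Perm (Fin m), f π) / (Nat.factorial m : ℝ)

/-- The standardized rank statistic `𝒯_A = (T_A − μ_A)/σ_A`. -/
noncomputable def rankTstd (A : Matrix (Fin m) (Fin m) ℝ) (π : Equiv.Perm (Fin m)) : ℝ :=
  (rankT A π - muM A) / sdev A

/-- `F_A`, the distribution function of `T_A`. -/
noncomputable def Fr (A : Matrix (Fin m) (Fin m) ℝ) (z : ℝ) : ℝ :=
  permExp (fun π => if rankT A π ≤ z then (1 : ℝ) else 0)

/-- `ℱ_A`, the distribution function of `𝒯_A`. -/
noncomputable def Fstd (A : Matrix (Fin m) (Fin m) ℝ) (z : ℝ) : ℝ :=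
  permExp (fun π => if rankTstd A π ≤ z then (1 : ℝ) else 0)

/-- `β_A = Σ_{i,j} |â_{ij}|³`. -/
noncomputable def betaM (A : Matrix (Fin m) (Fin m) ℝ) : ℝ := ∑ i, ∑ j, |hatM A i j| ^ 3

/-- `δ_A = Σ_{i,j} |â_{ij}|⁴`. -/
noncomputable def deltaM (A : Matrix (Fin m) (Fin m) ℝ) : ℝ := ∑ i, ∑ j, |hatM A i j| ^ 4

/-- `η_A = Σ_{i,j} |â_{ij}|⁵`. -/
noncomputable def etaM (A : Matrix (Fin m) (Fin m) ℝ) : ℝ := ∑ i, ∑ j, |hatM A i j| ^ 5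

/-- `D_A = (δ_A/n)^{1/2}`. -/
noncomputable def DM (A : Matrix (Fin m) (Fin m) ℝ) : ℝ := Real.sqrt (deltaM A / (m : ℝ))

/-- `E_A = (η_A/n)^{1/3}`. -/
noncomputable def EM (A : Matrix (Fin m) (Fin m) ℝ) : ℝ := (etaM A / (m : ℝ)) ^ ((1 : ℝ) / 3)

/-- `λ_{1,A} = (1/n)Σ_{i,j} â_{ij}³`. -/
noncomputable def lam1 (A : Matrix (Fin m) (Fin m) ℝ) : ℝ := (∑ i, ∑ j, hatM A i j ^ 3) / (m : ℝ)

/-- `λ_{2,A}`. -/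
noncomputable def lam2 (A : Matrix (Fin m) (Fin m) ℝ) : ℝ :=
  (∑ i, ∑ j, hatM A i j ^ 4) / (m : ℝ) + 3 / (m : ℝ)
    - 3 / (m : ℝ) ^ 2 *
        ∑ i, ∑ j, ∑ k, (hatM A i j ^ 2 * hatM A i k ^ 2 + hatM A i j ^ 2 * hatM A k j ^ 2)

/-- First-order Edgeworth expansion `e_{1,A}`. -/
noncomputable def edge1 (A : Matrix (Fin m) (Fin m) ℝ) (x : ℝ) : ℝ :=
  gaussCDF x - gaussD x * (lam1 A / 6) * (x ^ 2 - 1)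

/-- Second-order Edgeworth expansion `e_{2,A}`. -/
noncomputable def edge2 (A : Matrix (Fin m) (Fin m) ℝ) (x : ℝ) : ℝ :=
  gaussCDF x - gaussD x *
    (lam1 A / 6 * (x ^ 2 - 1) + lam2 A / 24 * (x ^ 3 - 3 * x)
      + lam1 A ^ 2 / 72 * (x ^ 5 - 10 * x ^ 3 + 15 * x))

end RankDefs

namespace RankAux

variable {n : ℕ}

/-- Sum over pairs of distinct indices. -/
noncomputable def d2 (F : Fin n → Fin n → ℝ) : ℝ := ∑ i, ∑ j, if i = j then 0 else F i j

/-- Sum over triples of distinct indices. -/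
noncomputable def d3 (F : Fin n → Fin n → Fin n → ℝ) : ℝ :=
  ∑ i, ∑ j, ∑ k, if i = j ∨ i = k ∨ j = k then 0 else F i j k

lemma d2_congr {F G : Fin n → Fin n → ℝ} (h : ∀ i j, i ≠ j → F i j = G i j) : d2 F = d2 G := by
  unfold d2
  refine sum_congr rfl fun i _ => sum_congr rfl fun j _ => ?_
  split_ifs with hij
  · rfl
  · exact h i j hij

lemma d3_congr {F G : Fin n → Fin n → Fin n → ℝ}
    (h : ∀ i j k, i ≠ j → i ≠ k → j ≠ k → F i j k = G i j k) : d3 F = d3 G := by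
  unfold d3
  refine sum_congr rfl fun i _ => sum_congr rfl fun j _ => sum_congr rfl fun k _ => ?_
  split_ifs with hij
  · rfl
  · push Not at hij
    exact h i j k hij.1 hij.2.1 hij.2.2

lemma d2_add (F G : Fin n → Fin n → ℝ) : d2 (fun i j => F i j + G i j) = d2 F + d2 G := by
  simp only [d2, ← sum_add_distrib]
  refine sum_congr rfl fun i _ => sum_congr rfl fun j _ => ?_
  split_ifs <;> simp

lemma d2_mul (c : ℝ) (F : Fin n → Fin n → ℝ) : d2 (fun i j => c * F i j) = c * d2 F := by
  simp only [d2, mul_sum]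
  refine sum_congr rfl fun i _ => sum_congr rfl fun j _ => ?_
  split_ifs <;> simp

lemma d3_add (F G : Fin n → Fin n → Fin n → ℝ) :
    d3 (fun i j k => F i j k + G i j k) = d3 F + d3 G := by
  simp only [d3, ← sum_add_distrib]
  refine sum_congr rfl fun i _ => sum_congr rfl fun j _ => sum_congr rfl fun k _ => ?_
  split_ifs <;> simp

lemma d3_mul (c : ℝ) (F : Fin n → Fin n → Fin n → ℝ) :
    d3 (fun i j k => c * F i j k) = c * d3 F := by
  simp only [d3, mul_sum]
  refine sum_congr rfl fun i _ => sum_congr rfl fun j _ => sum_congr rfl fun k _ => ?_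
  split_ifs <;> simp

lemma d2_sum {ι : Type*} (s : Finset ι) (F : ι → Fin n → Fin n → ℝ) :
    ∑ p ∈ s, d2 (F p) = d2 (fun i j => ∑ p ∈ s, F p i j) := by
  unfold d2
  rw [sum_comm]
  refine sum_congr rfl fun i _ => ?_
  rw [sum_comm]
  refine sum_congr rfl fun j _ => ?_
  split_ifs <;> simp

lemma d3_sum {ι : Type*} (s : Finset ι) (F : ι → Fin n → Fin n → Fin n → ℝ) :
    ∑ p ∈ s, d3 (F p) = d3 (fun i j k => ∑ p ∈ s, F p i j k) := by
  unfold d3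
  rw [sum_comm]
  refine sum_congr rfl fun i _ => ?_
  rw [sum_comm]
  refine sum_congr rfl fun j _ => ?_
  rw [sum_comm]
  refine sum_congr rfl fun k _ => ?_
  split_ifs <;> simp

lemma d2_swap (F : Fin n → Fin n → ℝ) : d2 (fun i j => F j i) = d2 F := by
  unfold d2
  rw [sum_comm]
  refine sum_congr rfl fun i _ => sum_congr rfl fun j _ => ?_
  simp only [eq_comm]

lemma d3_swap12 (F : Fin n → Fin n → Fin n → ℝ) : d3 (fun i j k => F j i k) = d3 F := by
  unfold d3
  rw [sum_comm]
  refine sum_congr rfl fun i _ => sum_congr rfl fun j _ => sum_congr rfl fun k _ => ?_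
  congr 1
  apply propext
  constructor <;> (rintro (h | h | h) <;> simp [h])

lemma d3_swap23 (F : Fin n → Fin n → Fin n → ℝ) : d3 (fun i j k => F i k j) = d3 F := by
  unfold d3
  refine sum_congr rfl fun i _ => ?_
  rw [sum_comm]
  refine sum_congr rfl fun j _ => sum_congr rfl fun k _ => ?_
  congr 1
  apply propext
  constructor <;> (rintro (h | h | h) <;> simp [h])

lemma d2_eq (F : Fin n → Fin n → ℝ) : d2 F = (∑ i, ∑ j, F i j) - ∑ i, F i i := by
  unfold d2
  rw [← sum_sub_distrib]
  refine sum_congr rfl fun i _ => ?_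
  have : ∀ j, (if i = j then 0 else F i j) = F i j - if i = j then F i j else 0 := by
    intro j; split_ifs <;> simp
  simp [this]

lemma d2_mul_sum (F : Fin n → Fin n → ℝ) (f : Fin n → ℝ) :
    d2 F * ∑ k, f k = d2 (fun i j => F i j * (f i + f j)) + d3 (fun i j k => F i j * f k) := by
  unfold d2 d3
  rw [sum_mul, ← sum_add_distrib]
  refine sum_congr rfl fun i _ => ?_
  rw [sum_mul, ← sum_add_distrib]
  refine sum_congr rfl fun j _ => ?_
  by_cases hij : i = j
  · simp [hij]
  · have : ∀ k, (if i = j ∨ i = k ∨ j = k then 0 else F i j * f k)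
        = F i j * f k - (if i = k then F i j * f k else 0) - if j = k then F i j * f k else 0 := by
      intro k
      by_cases h1 : i = k
      · by_cases h2 : j = k
        · exact absurd (h1.trans h2.symm) hij
        · simp [h1, h2]
      · by_cases h2 : j = k <;> simp [hij, h1, h2]
    simp only [this]
    simp only [sum_sub_distrib, sum_ite_eq, mem_univ, if_true, hij, if_false, ← mul_sum]
    ring

lemma sum_mul_sum_d (F f : Fin n → ℝ) :
    (∑ i, F i) * ∑ k, f k = (∑ i, F i * f i) + d2 (fun i j => F i * f j) := by
  rw [d2_eq]; simp only [← mul_sum, ← sum_mul]; ring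

/-- Exchangeability of the values of a uniform permutation outside `S`. -/
lemma exch (S : Finset (Fin n)) (k : Fin n) (hk : k ∉ S) (Q : Equiv.Perm (Fin n) → Fin n → ℝ)
    (hQ : ∀ π σ : Equiv.Perm (Fin n), (∀ s ∈ S, π s = σ s) → Q π = Q σ) :
    ((n : ℝ) - #S) * ∑ π : Equiv.Perm (Fin n), Q π (π k)
      = ∑ π : Equiv.Perm (Fin n), ∑ l ∈ Sᶜ, Q π (π l) := by
  rw [sum_comm]
  have h : ∀ l ∈ Sᶜ, ∑ π : Equiv.Perm (Fin n), Q π (π l) = ∑ π : Equiv.Perm (Fin n), Q π (π k) := by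
    intro l hl
    rw [← Equiv.sum_comp (Equiv.mulRight (Equiv.swap k l))]
    refine sum_congr rfl fun π _ => ?_
    have h1 : Q (π * Equiv.swap k l) = Q π := by
      apply hQ
      intro s hs
      have : s ≠ k := fun h => hk (h ▸ hs)
      have : s ≠ l := fun h => (mem_compl.1 hl) (h ▸ hs)
      simp [Equiv.swap_apply_of_ne_of_ne, *]
    simp [h1]
  rw [sum_congr rfl h, sum_const, nsmul_eq_mul, card_compl, Fintype.card_fin,
    Nat.cast_sub (by simpa using card_le_univ S)]

/-- Conditional expectation of the part of the statistic outside `S`. -/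
lemma condT (a : Fin n → Fin n → ℝ) (hr : ∀ i, ∑ j, a i j = 0) (hc : ∀ j, ∑ i, a i j = 0)
    (S : Finset (Fin n)) (P : Equiv.Perm (Fin n) → ℝ)
    (hP : ∀ π σ : Equiv.Perm (Fin n), (∀ s ∈ S, π s = σ s) → P π = P σ) :
    ((n : ℝ) - #S) * ∑ π : Equiv.Perm (Fin n), P π * ∑ k, a k (π k)
      = ∑ π : Equiv.Perm (Fin n), P π *
        (((n : ℝ) - #S) * (∑ s ∈ S, a s (π s)) + ∑ s ∈ S, ∑ t ∈ S, a s (π t)) := by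
  have e1 : ∀ π : Equiv.Perm (Fin n), ∑ k, a k (π k)
      = (∑ s ∈ S, a s (π s)) + ∑ k ∈ Sᶜ, a k (π k) := fun π => (sum_add_sum_compl S _).symm
  have e2 : ((n : ℝ) - #S) * ∑ π : Equiv.Perm (Fin n), P π * ∑ k ∈ Sᶜ, a k (π k)
      = ∑ π : Equiv.Perm (Fin n), P π * ∑ s ∈ S, ∑ t ∈ S, a s (π t) := by
    simp only [mul_sum (Sᶜ)]
    rw [sum_comm, mul_sum]
    have : ∀ k ∈ Sᶜ, ((n : ℝ) - #S) * ∑ π : Equiv.Perm (Fin n), P π * a k (π k)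
        = ∑ π : Equiv.Perm (Fin n), P π * -∑ t ∈ S, a k (π t) := by
      intro k hk
      rw [exch S k (mem_compl.1 hk) (fun π x => P π * a k x)
        (fun π σ h => by rw [hP π σ h])]
      refine sum_congr rfl fun π _ => ?_
      rw [← mul_sum]
      have h0 : ∑ l, a k (π l) = 0 := by rw [Equiv.sum_comp π (a k)]; exact hr k
      rw [← sum_add_sum_compl S] at h0
      rw [eq_neg_of_add_eq_zero_right h0]
    rw [sum_congr rfl this, sum_comm]
    refine sum_congr rfl fun π _ => ?_
    rw [← mul_sum, sum_neg_distrib, sum_comm, ← sum_neg_distrib]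
    congr 1
    rw [sum_comm (s := S) (t := S)]
    refine sum_congr rfl fun t _ => ?_
    have h0 := hc (π t)
    rw [← sum_add_sum_compl S] at h0
    linarith
  simp only [e1, mul_add, sum_add_distrib]
  rw [e2]
  congr 1
  rw [mul_sum]
  exact sum_congr rfl fun π _ => by ring

lemma K1 (a : Fin n → Fin n → ℝ) (hr : ∀ i, ∑ j, a i j = 0) (hc : ∀ j, ∑ i, a i j = 0)
    (G : Fin n → Fin n → ℝ) :
    ((n : ℝ) - 1) * ∑ π : Equiv.Perm (Fin n), (∑ i, G i (π i)) * ∑ k, a k (π k)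
      = ∑ π : Equiv.Perm (Fin n), ∑ i, G i (π i) * (n * a i (π i)) := by
  simp only [sum_mul]
  rw [sum_comm, sum_comm (s := (univ : Finset (Equiv.Perm (Fin n)))), mul_sum]
  refine sum_congr rfl fun i _ => ?_
  have := condT a hr hc {i} (fun π => G i (π i)) (fun π σ h => by rw [h i (by simp)])
  simp only [card_singleton, Nat.cast_one, sum_singleton] at this
  rw [this]
  exact sum_congr rfl fun π _ => by ring

lemma K2 (a : Fin n → Fin n → ℝ) (hr : ∀ i, ∑ j, a i j = 0) (hc : ∀ j, ∑ i, a i j = 0)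
    (G : Fin n → Fin n → Fin n → Fin n → ℝ) :
    ((n : ℝ) - 2) * ∑ π : Equiv.Perm (Fin n), d2 (fun i j => G i j (π i) (π j)) * ∑ k, a k (π k)
      = ∑ π : Equiv.Perm (Fin n), d2 (fun i j => G i j (π i) (π j) *
        (((n : ℝ) - 1) * (a i (π i) + a j (π j)) + a i (π j) + a j (π i))) := by
  simp only [mul_comm (d2 _), ← d2_mul, d2_sum]
  refine d2_congr fun i j hij => ?_
  have := condT a hr hc {i, j} (fun π => G i j (π i) (π j))
    (fun π σ h => by rw [h i (by simp), h j (by simp)])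
  simp only [card_pair hij, sum_pair hij] at this
  push_cast at this
  simp only [mul_comm (∑ k, a k _)]
  rw [this]
  exact sum_congr rfl fun π _ => by ring

lemma K3 (a : Fin n → Fin n → ℝ) (hr : ∀ i, ∑ j, a i j = 0) (hc : ∀ j, ∑ i, a i j = 0)
    (G : Fin n → Fin n → Fin n → Fin n → Fin n → Fin n → ℝ) :
    ((n : ℝ) - 3) * ∑ π : Equiv.Perm (Fin n),
        d3 (fun i j k => G i j k (π i) (π j) (π k)) * ∑ k, a k (π k)
      = ∑ π : Equiv.Perm (Fin n), d3 (fun i j k => G i j k (π i) (π j) (π k) *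
        (((n : ℝ) - 2) * (a i (π i) + a j (π j) + a k (π k)) + a i (π j) + a j (π i)
          + a i (π k) + a k (π i) + a j (π k) + a k (π j))) := by
  simp only [mul_comm (d3 _), ← d3_mul, d3_sum]
  refine d3_congr fun i j k hij hik hjk => ?_
  have := condT a hr hc {i, j, k} (fun π => G i j k (π i) (π j) (π k))
    (fun π σ h => by rw [h i (by simp), h j (by simp), h k (by simp)])
  have hs : ∀ f : Fin n → ℝ, ∑ x ∈ ({i, j, k} : Finset (Fin n)), f x = f i + (f j + f k) := by
    intro f
    rw [sum_insert (by simp [hij, hik]), sum_pair hjk]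
  have hcd : #({i, j, k} : Finset (Fin n)) = 3 := by
    rw [card_insert_of_notMem (by simp [hij, hik]), card_pair hjk]
  simp only [hcd, hs] at this
  push_cast at this
  simp only [mul_comm (∑ k, a k _)]
  rw [this]
  exact sum_congr rfl fun π _ => by ring

lemma K2' (a : Fin n → Fin n → ℝ) (hr : ∀ i, ∑ j, a i j = 0) (hc : ∀ j, ∑ i, a i j = 0)
    (G : Fin n → Fin n → Fin n → Fin n → ℝ) :
    ((n : ℝ) - 2) * ∑ π : Equiv.Perm (Fin n), d3 (fun i j k => G i j (π i) (π j) * a k (π k))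
      = ∑ π : Equiv.Perm (Fin n), d2 (fun i j => G i j (π i) (π j) *
        (a i (π i) + a j (π j) + a i (π j) + a j (π i))) := by
  have h := K2 a hr hc G
  simp only [d2_mul_sum _ (fun k => a k _), sum_add_distrib, mul_add] at h
  rw [← eq_sub_iff_add_eq'] at h
  rw [h, mul_sum, ← sum_sub_distrib]
  refine sum_congr rfl fun π _ => ?_
  rw [sub_eq_iff_eq_add, ← d2_mul, ← d2_add]
  exact d2_congr fun i j _ => by ring

lemma E1 (i : Fin n) (Q : Fin n → ℝ) :
    (n : ℝ) * ∑ π : Equiv.Perm (Fin n), Q (π i) = (n.factorial : ℝ) * ∑ x, Q x := by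
  have h := exch ∅ i (by simp) (fun _ x => Q x) (fun _ _ _ => rfl)
  simp only [card_empty, Nat.cast_zero, sub_zero, compl_empty] at h
  rw [h]
  simp only [fun π : Equiv.Perm (Fin n) => Equiv.sum_comp π Q, sum_const, card_univ,
    Fintype.card_perm, Fintype.card_fin, nsmul_eq_mul]

lemma E1' (G : Fin n → Fin n → ℝ) :
    (n : ℝ) * ∑ π : Equiv.Perm (Fin n), ∑ i, G i (π i)
      = (n.factorial : ℝ) * ∑ i, ∑ x, G i x := by
  rw [sum_comm, mul_sum, mul_sum]
  exact sum_congr rfl fun i _ => E1 i (G i)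

lemma E2 (G : Fin n → Fin n → Fin n → Fin n → ℝ) :
    (n : ℝ) * (((n : ℝ) - 1) * ∑ π : Equiv.Perm (Fin n), d2 (fun i j => G i j (π i) (π j)))
      = (n.factorial : ℝ) * ((∑ i, ∑ j, ∑ x, ∑ y, G i j x y) - (∑ i, ∑ x, ∑ y, G i i x y)
          - (∑ i, ∑ j, ∑ x, G i j x x) + ∑ i, ∑ x, G i i x x) := by
  have h1 : (∑ i, ∑ j, ∑ x, ∑ y, G i j x y) - (∑ i, ∑ x, ∑ y, G i i x y)
          - (∑ i, ∑ j, ∑ x, G i j x x) + ∑ i, ∑ x, G i i x x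
      = d2 (fun i j => ∑ x, ((∑ y, G i j x y) - G i j x x)) := by
    rw [d2_eq]; simp only [sum_sub_distrib]; ring
  rw [h1, d2_sum, ← d2_mul, ← d2_mul, ← d2_mul]
  refine d2_congr fun i j hij => ?_
  have h := exch {i} j (by simpa using hij.symm) (fun π y => G i j (π i) y)
    (fun π σ h => by rw [h i (by simp)])
  simp only [card_singleton, Nat.cast_one] at h
  rw [h, ← E1 i]
  congr 1
  refine sum_congr rfl fun π _ => ?_
  rw [← Equiv.sum_comp π, ← sum_add_sum_compl {i}, sum_singleton]
  ring


lemma d3_symm (b : Fin n → Fin n → ℝ) (c : ℝ) :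
    d3 (fun i j k => b i i * b j j * b k k * (c * (b i i + b j j + b k k) + b i j + b j i
      + b i k + b k i + b j k + b k j))
    = d3 (fun i j k => (3 * c * (b i i ^ 2 * b j j) + 6 * (b i i * b j j * b i j)) * b k k) := by
  have hX2 := d3_swap12 (fun i j k => b i i * b j j * b k k * b i i)
  have hX3 := d3_swap23 (fun i j k => b i i * b j j * b k k * b j j)
  have hji := d3_swap12 (fun i j k => b i i * b j j * b k k * b i j)
  have hik := d3_swap23 (fun i j k => b i i * b j j * b k k * b i j)
  have hki := d3_swap23 (fun i j k => b i i * b j j * b k k * b j i)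
  have hjk := d3_swap12 (fun i j k => b i i * b j j * b k k * b i k)
  have hkj := d3_swap12 (fun i j k => b i i * b j j * b k k * b k i)
  have e1 : ∀ i j k, b i i * b j j * b k k * (c * (b i i + b j j + b k k) + b i j + b j i
      + b i k + b k i + b j k + b k j) = c * (b i i * b j j * b k k * b i i)
      + c * (b j j * b i i * b k k * b j j) + c * (b i i * b k k * b j j * b k k)
      + b i i * b j j * b k k * b i j + b j j * b i i * b k k * b j i
      + b i i * b k k * b j j * b i k + b i i * b k k * b j j * b k i
      + b j j * b i i * b k k * b j k + b j j * b i i * b k k * b k j := by intros; ring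
  have e2 : ∀ i j k, (3 * c * (b i i ^ 2 * b j j) + 6 * (b i i * b j j * b i j)) * b k k
      = 3 * c * (b i i * b j j * b k k * b i i) + 6 * (b i i * b j j * b k k * b i j) := by
    intros; ring
  have hX2' : d3 (fun i j k => b i i * b j j * b k k * b j j)
      = d3 (fun i j k => b i i * b j j * b k k * b i i) := by
    rw [← hX2]; exact d3_congr fun i j k _ _ _ => by ring
  have hji' : d3 (fun i j k => b i i * b j j * b k k * b j i)
      = d3 (fun i j k => b i i * b j j * b k k * b i j) := by
    rw [← hji]; exact d3_congr fun i j k _ _ _ => by ring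
  have hik' : d3 (fun i j k => b i i * b j j * b k k * b i k)
      = d3 (fun i j k => b i i * b j j * b k k * b i j) := by
    rw [← hik]; exact d3_congr fun i j k _ _ _ => by ring
  have hki' : d3 (fun i j k => b i i * b j j * b k k * b k i)
      = d3 (fun i j k => b i i * b j j * b k k * b i j) := by
    rw [← hji', ← hki]; exact d3_congr fun i j k _ _ _ => by ring
  simp only [e1, e2, d3_add, d3_mul]
  rw [hX2, hX3, hX2', hji, hik, hki, hji', hjk, hik', hkj, hki']
  ring

lemma pow_three (f : Fin n → ℝ) : (∑ i, f i) ^ 3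
    = (∑ i, f i ^ 3) + d2 (fun i j => 3 * (f i ^ 2 * f j)) + d3 (fun i j k => f i * f j * f k) := by
  have h : (∑ i, f i) ^ 3 = (∑ i, f i) * (∑ i, f i) * ∑ i, f i := by ring
  rw [h, sum_mul_sum_d, add_mul, sum_mul_sum_d, d2_mul_sum]
  have hs := d2_swap (fun i j => f i ^ 2 * f j)
  have e1 : ∀ i j, f i * f j * (f i + f j) = f i ^ 2 * f j + f j ^ 2 * f i := by intros; ring
  have e2 : ∀ i j, f i * f i * f j = f i ^ 2 * f j := by intros; ring
  have e3 : ∀ i, f i * f i * f i = f i ^ 3 := by intros; ring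
  simp only [e1, e3, d2_add, d2_mul]
  simp only [e2]
  rw [hs]; ring

section finite

/-- Inclusion-exclusion form of the sum over distinct rows and distinct columns. -/
noncomputable def q2 (G : Fin n → Fin n → Fin n → Fin n → ℝ) : ℝ :=
  (∑ i, ∑ j, ∑ x, ∑ y, G i j x y) - (∑ i, ∑ x, ∑ y, G i i x y)
          - (∑ i, ∑ j, ∑ x, G i j x x) + ∑ i, ∑ x, G i i x x

lemma q2_add (F G : Fin n → Fin n → Fin n → Fin n → ℝ) :
    q2 (fun i j x y => F i j x y + G i j x y) = q2 F + q2 G := by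
  simp only [q2, sum_add_distrib]; ring

lemma q2_mul (c : ℝ) (F : Fin n → Fin n → Fin n → Fin n → ℝ) :
    q2 (fun i j x y => c * F i j x y) = c * q2 F := by
  simp only [q2, ← mul_sum]; ring

lemma q2_swap (F : Fin n → Fin n → Fin n → Fin n → ℝ) :
    q2 (fun i j x y => F j i y x) = q2 F := by
  unfold q2
  have h1 : ∑ i, ∑ j, ∑ x, ∑ y, F j i y x = ∑ i, ∑ j, ∑ x, ∑ y, F i j x y := by
    rw [sum_comm]
    exact sum_congr rfl fun i _ => sum_congr rfl fun j _ => sum_comm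
  have h2 : ∑ i, ∑ x, ∑ y, F i i y x = ∑ i, ∑ x, ∑ y, F i i x y :=
    sum_congr rfl fun i _ => sum_comm
  rw [h1, h2, sum_comm (f := fun i j => ∑ x, F j i x x)]

lemma q2_transpose (F : Fin n → Fin n → Fin n → Fin n → ℝ) :
    q2 (fun i j x y => F x y i j) = q2 F := by
  unfold q2
  have h1 : ∑ i, ∑ j, ∑ x, ∑ y, F x y i j = ∑ i, ∑ j, ∑ x, ∑ y, F i j x y := by
    rw [sum_congr rfl fun i _ => sum_comm, sum_comm]
    refine sum_congr rfl fun x _ => ?_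
    rw [sum_congr rfl fun i _ => sum_comm]
    rw [sum_congr rfl fun i _ => sum_congr rfl fun y _ => rfl, sum_comm]
  have h2 : ∑ i, ∑ x, ∑ y, F x y i i = ∑ i, ∑ j, ∑ x, F i j x x := by
    rw [sum_comm]
    exact sum_congr rfl fun i _ => sum_comm
  have h3 : ∑ i, ∑ j, ∑ x, F x x i j = ∑ i, ∑ x, ∑ y, F i i x y := by
    rw [sum_congr rfl fun i _ => sum_comm, sum_comm]
  have h4 : ∑ i, ∑ x, F x x i i = ∑ i, ∑ x, F i i x x := sum_comm
  rw [h1, h2, h3, h4]; ring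

variable (a : Fin n → Fin n → ℝ)

lemma fin_h6 : q2 (fun i j x y => a i x * a j y * a i y * a j x)
    = (∑ i, ∑ j, ∑ k, ∑ h, a i k * a i h * a j k * a j h)
      - (∑ i, ∑ j, ∑ k, (a i j ^ 2 * a i k ^ 2 + a i j ^ 2 * a k j ^ 2)) + ∑ i, ∑ j, a i j ^ 4 := by
  have e1 : ∀ i j x y, a i x * a j y * a i y * a j x = a i x * a i y * a j x * a j y := by
    intros; ring
  have e2 : ∀ i x y, a i x * a i y * a i x * a i y = a i x ^ 2 * a i y ^ 2 := by intros; ring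
  have e3 : ∀ i j x, a i x * a i x * a j x * a j x = a i x ^ 2 * a j x ^ 2 := by intros; ring
  have e4 : ∀ i x, a i x ^ 2 * a i x ^ 2 = a i x ^ 4 := by intros; ring
  simp only [q2, e1, e2, e3, e4, sum_add_distrib]
  have e5 : ∀ i, ∑ j, ∑ x, a i x ^ 2 * a j x ^ 2 = ∑ j, ∑ k, a i j ^ 2 * a k j ^ 2 :=
    fun i => sum_comm
  simp only [e5]; ring

lemma fin_h2 : q2 (fun i j x y => a i x ^ 2 * a j y ^ 2)
    = (∑ i, ∑ j, a i j ^ 2) ^ 2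
      - (∑ i, ∑ j, ∑ k, (a i j ^ 2 * a i k ^ 2 + a i j ^ 2 * a k j ^ 2)) + ∑ i, ∑ j, a i j ^ 4 := by
  have e4 : ∀ i x, a i x ^ 2 * a i x ^ 2 = a i x ^ 4 := by intros; ring
  simp only [q2, e4, sum_add_distrib]
  have e5 : ∀ i, ∑ j, ∑ x, a i x ^ 2 * a j x ^ 2 = ∑ j, ∑ k, a i j ^ 2 * a k j ^ 2 :=
    fun i => sum_comm
  have e6 : (∑ i, ∑ j, a i j ^ 2) ^ 2 = ∑ i, ∑ j, ∑ x, ∑ y, a i x ^ 2 * a j y ^ 2 := by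
    simp only [← mul_sum, ← sum_mul, sq (∑ i, ∑ j, a i j ^ 2)]
  simp only [e5]; rw [e6]; ring

/-- A factor depending on one row-column pair only, against a factor linear in the other. -/
lemma fin_lin (hr : ∀ i, ∑ j, a i j = 0) (hc : ∀ j, ∑ i, a i j = 0) (g : Fin n → Fin n → ℝ) :
    q2 (fun i j x y => g i x * a j y) = ∑ i, ∑ x, g i x * a i x := by
  have e5 : ∀ i, ∑ j, ∑ x, g i x * a j x = ∑ x, ∑ j, g i x * a j x := fun i => sum_comm
  simp only [q2, e5, ← mul_sum, hr, hc]; simp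

/-- A factor depending on `i, x, y` only, against `a j y`. -/
lemma fin_row (hc : ∀ j, ∑ i, a i j = 0) (g : Fin n → Fin n → Fin n → ℝ) :
    q2 (fun i j x y => g i x y * a j y)
      = (∑ i, ∑ x, g i x x * a i x) - ∑ i, ∑ x, ∑ y, g i x y * a i y := by
  have e1 : ∀ i, ∑ j, ∑ x, ∑ y, g i x y * a j y = 0 := by
    intro i
    rw [sum_comm]
    refine sum_eq_zero fun x _ => ?_
    rw [sum_comm]
    exact sum_eq_zero fun y _ => by rw [← mul_sum, hc, mul_zero]
  have e2 : ∀ i, ∑ j, ∑ x, g i x x * a j x = 0 := by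
    intro i
    rw [sum_comm]
    exact sum_eq_zero fun y _ => by rw [← mul_sum, hc, mul_zero]
  simp only [q2, e1, e2]; simp; ring

end finite

theorem third (a : Fin n → Fin n → ℝ) (hr : ∀ i, ∑ j, a i j = 0) (hc : ∀ j, ∑ i, a i j = 0)
    (hn : 3 ≤ n) :
    ∑ π : Equiv.Perm (Fin n), (∑ i, a i (π i)) ^ 3 = (n.factorial : ℝ) *
      ((n : ℝ) / (((n : ℝ) - 1) * ((n : ℝ) - 2)) * ∑ i, ∑ j, a i j ^ 3) := by
  have h1 := E1' (fun i x => a i x ^ 3)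
  have h2 := E2 (fun i j x y => 3 * (a i x ^ 2 * a j y))
  have h3 := K2' a hr hc (fun i j x y => a i x * a j y)
  have h4 := E2 (fun i j x y => a i x * a j y * (a i x + a j y + a i y + a j x))
  rw [← q2] at h2 h4
  have v1 : q2 (fun i j x y => a i x ^ 2 * a j y) = ∑ i, ∑ j, a i j ^ 3 := by
    rw [fin_lin a hr hc (fun i x => a i x ^ 2)]
    exact sum_congr rfl fun i _ => sum_congr rfl fun j _ => by ring
  have v2 : q2 (fun i j x y => a j y ^ 2 * a i x) = ∑ i, ∑ j, a i j ^ 3 := by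
    rw [← v1]; exact q2_swap (fun i j x y => a i x ^ 2 * a j y)
  have v3 : ∀ (a : Fin n → Fin n → ℝ) (hr : ∀ i, ∑ j, a i j = 0) (hc : ∀ j, ∑ i, a i j = 0),
      q2 (fun i j x y => a i x * a i y * a j y) = ∑ i, ∑ j, a i j ^ 3 := by
    intro a hr hc
    rw [fin_row a hc (fun i x y => a i x * a i y)]
    have : ∀ i, ∑ x, ∑ y, a i x * a i y * a i y = 0 := by
      intro i
      rw [sum_comm]
      exact sum_eq_zero fun y _ => by rw [← sum_mul, ← sum_mul, hr]; simp
    simp only [this]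
    simp only [sum_const_zero, sub_zero]
    exact sum_congr rfl fun i _ => sum_congr rfl fun j _ => by ring
  have v4 : q2 (fun i j x y => a i x * a j x * a j y) = ∑ i, ∑ j, a i j ^ 3 := by
    have := q2_transpose (fun i j x y => (fun p q => a q p) i x * (fun p q => a q p) i y
      * (fun p q => a q p) j y)
    rw [v3 (fun p q => a q p) hc hr] at this
    rw [this]; exact sum_comm
  have e : ∀ i j x y, a i x * a j y * (a i x + a j y + a i y + a j x)
      = a i x ^ 2 * a j y + a j y ^ 2 * a i x + a i x * a i y * a j y + a i x * a j x * a j y := by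
    intros; ring
  have h4' := h4
  conv at h4' => rhs; simp only [e, q2_add, v1, v2, v3 a hr hc, v4]
  simp only [q2_mul, v1] at h2
  rw [← h3] at h4'
  simp only [pow_three, sum_add_distrib]
  have n3 : (3 : ℝ) ≤ n := by exact_mod_cast hn
  have p0 : (n : ℝ) ≠ 0 := by linarith
  have p1 : (n : ℝ) - 1 ≠ 0 := by linarith
  have p2 : (n : ℝ) - 2 ≠ 0 := by linarith
  generalize (∑ i, ∑ j, a i j ^ 3) = C at *
  generalize (∑ x : Equiv.Perm (Fin n), ∑ i, a i (x i) ^ 3) = U at *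
  generalize (∑ x : Equiv.Perm (Fin n), d2 (fun i j => 3 * (a i (x i) ^ 2 * a j (x j)))) = V at *
  generalize (∑ x : Equiv.Perm (Fin n), d3 (fun i j k => a i (x i) * a j (x j) * a k (x k))) = W
    at *
  clear h3 h4
  have hU : U = n.factorial * C / n := by field_simp; linarith
  have hV : V = 3 * n.factorial * C / (n * (n - 1)) := by field_simp; linarith
  have hW : W = 4 * n.factorial * C / (n * (n - 1) * (n - 2)) := by field_simp; linarith
  rw [hU, hV, hW]
  field_simp
  ring

theorem fourth (a : Fin n → Fin n → ℝ) (hr : ∀ i, ∑ j, a i j = 0) (hc : ∀ j, ∑ i, a i j = 0)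
    (hn : 4 ≤ n) (h2 : ∑ i, ∑ j, a i j ^ 2 = n - 1) :
    ∑ π : Equiv.Perm (Fin n), (∑ i, a i (π i)) ^ 4 = (n.factorial : ℝ) *
      (3 * ((n : ℝ) ^ 2 - 3 * (n : ℝ) + 1) * ((n : ℝ) - 1) /
            ((n : ℝ) * ((n : ℝ) - 2) * ((n : ℝ) - 3))
          - 3 / (((n : ℝ) - 2) * ((n : ℝ) - 3)) *
              ∑ i, ∑ j, ∑ k, (a i j ^ 2 * a i k ^ 2 + a i j ^ 2 * a k j ^ 2)
          + (n : ℝ) * ((n : ℝ) + 1) / (((n : ℝ) - 1) * ((n : ℝ) - 2) * ((n : ℝ) - 3)) *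
              ∑ i, ∑ j, a i j ^ 4
          + 6 / ((n : ℝ) * ((n : ℝ) - 1) * ((n : ℝ) - 2) * ((n : ℝ) - 3)) *
              ∑ i, ∑ j, ∑ k, ∑ h, a i k * a i h * a j k * a j h) := by
  have w6 := fin_h6 a
  have w2 := fin_h2 a
  rw [h2] at w2
  -- the row and column sums of squares
  have hRC : ∑ i, ∑ j, ∑ k, (a i j ^ 2 * a i k ^ 2 + a i j ^ 2 * a k j ^ 2)
    = (∑ i, ∑ j, ∑ k, a i j ^ 2 * a i k ^ 2) + ∑ i, ∑ j, ∑ k, a i j ^ 2 * a k j ^ 2 := by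
    simp only [sum_add_distrib]
  have v1 : q2 (fun i j x y => a i x ^ 3 * a j y) = ∑ i, ∑ j, a i j ^ 4 := by
    rw [fin_lin a hr hc (fun i x => a i x ^ 3)]
    exact sum_congr rfl fun i _ => sum_congr rfl fun j _ => by ring
  have v3 : ∀ (a : Fin n → Fin n → ℝ) (hr : ∀ i, ∑ j, a i j = 0) (hc : ∀ j, ∑ i, a i j = 0),
      q2 (fun i j x y => a i x ^ 2 * a i y * a j y)
        = (∑ i, ∑ j, a i j ^ 4) - ∑ i, ∑ j, ∑ k, a i j ^ 2 * a i k ^ 2 := by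
    intro a hr hc
    rw [fin_row a hc (fun i x y => a i x ^ 2 * a i y)]
    congr 1
    · exact sum_congr rfl fun i _ => sum_congr rfl fun j _ => by ring
  have v4 : q2 (fun i j x y => a i x ^ 2 * a j x * a j y)
      = (∑ i, ∑ j, a i j ^ 4) - ∑ i, ∑ j, ∑ k, a i j ^ 2 * a k j ^ 2 := by
    have := q2_transpose (fun i j x y => (fun p q => a q p) i x ^ 2 * (fun p q => a q p) i y
      * (fun p q => a q p) j y)
    rw [v3 (fun p q => a q p) hc hr] at this
    rw [this]
    congr 1
    · exact sum_comm
    · exact sum_comm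
  have v4' : q2 (fun i j x y => a j y ^ 2 * a i y * a i x)
      = (∑ i, ∑ j, a i j ^ 4) - ∑ i, ∑ j, ∑ k, a i j ^ 2 * a k j ^ 2 := by
    rw [← v4]; exact q2_swap (fun i j x y => a i x ^ 2 * a j x * a j y)
  have v5 : q2 (fun i j x y => a i x * a i y ^ 2 * a j y) = ∑ i, ∑ j, a i j ^ 4 := by
    rw [fin_row a hc (fun i x y => a i x * a i y ^ 2)]
    have : ∀ i, ∑ x, ∑ y, a i x * a i y ^ 2 * a i y = 0 := by
      intro i
      rw [sum_comm]
      exact sum_eq_zero fun y _ => by rw [← sum_mul, ← sum_mul, hr]; simp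
    simp only [this]
    simp only [sum_const_zero, sub_zero]
    exact sum_congr rfl fun i _ => sum_congr rfl fun j _ => by ring
  -- reductions
  have r1 := K1 a hr hc (fun i x => a i x ^ 3)
  have s1 := E1' (fun i x => a i x ^ 3 * (n * a i x))
  have r2 := K2 a hr hc (fun i j x y => 3 * (a i x ^ 2 * a j y))
  have s2 := E2 (fun i j x y => 3 * (a i x ^ 2 * a j y) *
        (((n : ℝ) - 1) * (a i x + a j y) + a i y + a j x))
  have r3 := K3 a hr hc (fun i j k x y z => a i x * a j y * a k z)
  have t3 := fun π : Equiv.Perm (Fin n) => d3_symm (fun i j => a i (π j)) ((n : ℝ) - 2)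
  have r4 := K2' a hr hc (fun i j x y => 3 * ((n : ℝ) - 2) * (a i x ^ 2 * a j y)
    + 6 * (a i x * a j y * a i y))
  have s4 := E2 (fun i j x y => (3 * ((n : ℝ) - 2) * (a i x ^ 2 * a j y)
    + 6 * (a i x * a j y * a i y)) * (a i x + a j y + a i y + a j x))
  rw [← q2] at s2 s4
  rw [← r1] at s1
  rw [← r2] at s2
  rw [← r4] at s4
  simp only [t3] at r3
  rw [← r3] at s4
  clear r1 r2 r3 r4 t3
  have e1 : ∀ i x, a i x ^ 3 * (n * a i x) = n * a i x ^ 4 := by intros; ring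
  have e2 : ∀ i j x y, 3 * (a i x ^ 2 * a j y) *
        (((n : ℝ) - 1) * (a i x + a j y) + a i y + a j x)
      = 3 * ((n : ℝ) - 1) * (a i x ^ 3 * a j y) + 3 * ((n : ℝ) - 1) * (a i x ^ 2 * a j y ^ 2)
        + 3 * (a i x ^ 2 * a i y * a j y) + 3 * (a i x ^ 2 * a j x * a j y) := by intros; ring
  have e4 : ∀ i j x y, (3 * ((n : ℝ) - 2) * (a i x ^ 2 * a j y)
    + 6 * (a i x * a j y * a i y)) * (a i x + a j y + a i y + a j x)
      = 3 * ((n : ℝ) - 2) * (a i x ^ 3 * a j y) + 3 * ((n : ℝ) - 2) * (a i x ^ 2 * a j y ^ 2)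
        + (3 * ((n : ℝ) - 2) + 6) * (a i x ^ 2 * a i y * a j y)
        + 3 * ((n : ℝ) - 2) * (a i x ^ 2 * a j x * a j y)
        + 6 * (a j y ^ 2 * a i y * a i x) + 6 * (a i x * a i y ^ 2 * a j y)
        + 6 * (a i x * a j y * a i y * a j x) := by intros; ring
  simp only [e1, ← mul_sum] at s1
  simp only [e2, q2_add, q2_mul, v1, w2, v3 a hr hc, v4, hRC] at s2
  simp only [e4, q2_add, q2_mul, v1, w2, w6, v3 a hr hc, v4, v4', v5, hRC] at s4
  have hT : ∀ π : Equiv.Perm (Fin n), (∑ i, a i (π i)) ^ 4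
      = (∑ i, a i (π i)) ^ 3 * ∑ i, a i (π i) := fun π => by ring
  simp only [hT, pow_three, add_mul, sum_add_distrib, hRC]
  clear hT e1 e2 e4 v1 v3 v4 v4' v5 w2 w6 hRC
  have n3 : (4 : ℝ) ≤ n := by exact_mod_cast hn
  have p0 : (n : ℝ) ≠ 0 := by linarith
  have p1 : (n : ℝ) - 1 ≠ 0 := by linarith
  have p2 : (n : ℝ) - 2 ≠ 0 := by linarith
  have p3 : (n : ℝ) - 3 ≠ 0 := by linarith
  generalize (∑ x : Equiv.Perm (Fin n), (∑ i, a i (x i) ^ 3) * ∑ i, a i (x i)) = U at *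
  generalize (∑ x : Equiv.Perm (Fin n), d2 (fun i j => 3 * (a i (x i) ^ 2 * a j (x j)))
    * ∑ i, a i (x i)) = V at *
  generalize (∑ x : Equiv.Perm (Fin n), d3 (fun i j k => a i (x i) * a j (x j) * a k (x k))
    * ∑ i, a i (x i)) = W at *
  generalize (∑ i, ∑ j, a i j ^ 4) = Q at *
  generalize (∑ i, ∑ j, ∑ k, a i j ^ 2 * a i k ^ 2) = R at *
  generalize (∑ i, ∑ j, ∑ k, a i j ^ 2 * a k j ^ 2) = C at *
  generalize (∑ i, ∑ j, ∑ k, ∑ h, a i k * a i h * a j k * a j h) = G at *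
  rw [← sub_eq_zero] at s1 s2 s4 ⊢
  have key : (n : ℝ) * (n - 1) * (n - 2) * (n - 3) ≠ 0 := by
    simp [p0, p1, p2, p3]
  apply (mul_eq_zero.1 _).resolve_left key
  have q1 : U = n.factorial * Q / (n - 1) := by
    field_simp
    apply mul_left_cancel₀ p0
    linarith
  rw [q1]
  field_simp
  linear_combination (n - 3) * s2 + s4

end RankAux


lemma hat_row (n : ℕ) (hn : 2 ≤ n) (A : Matrix (Fin n) (Fin n) ℝ) (i : Fin n) :
    ∑ j, hatM A i j = 0 := by
  have p0 : (n : ℝ) ≠ 0 := by positivity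
  unfold hatM
  rw [← sum_div]
  have : ∑ j, ctr A i j = 0 := by
    simp only [ctr, sum_add_distrib, sum_sub_distrib, sum_const, card_univ, Fintype.card_fin,
      nsmul_eq_mul, rowMean, colMean, totMean, ← sum_div]
    rw [sum_comm (f := fun x i => A i x)]
    field_simp
    ring
  rw [this, zero_div]

lemma hat_col (n : ℕ) (hn : 2 ≤ n) (A : Matrix (Fin n) (Fin n) ℝ) (j : Fin n) :
    ∑ i, hatM A i j = 0 := by
  have p0 : (n : ℝ) ≠ 0 := by positivity
  unfold hatM
  rw [← sum_div]
  have : ∑ i, ctr A i j = 0 := by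
    simp only [ctr, sum_add_distrib, sum_sub_distrib, sum_const, card_univ, Fintype.card_fin,
      nsmul_eq_mul, rowMean, colMean, totMean, ← sum_div]
    field_simp
    ring
  rw [this, zero_div]

lemma hat_std (n : ℕ) (hn : 2 ≤ n) (A : Matrix (Fin n) (Fin n) ℝ) (π : Equiv.Perm (Fin n)) :
    rankTstd A π = ∑ i, hatM A i (π i) := by
  have p0 : (n : ℝ) ≠ 0 := by positivity
  unfold hatM rankTstd rankT muM
  rw [← sum_div]
  congr 1
  simp only [ctr, sum_add_distrib, sum_sub_distrib, sum_const, card_univ, Fintype.card_fin,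
      nsmul_eq_mul]
  rw [Equiv.sum_comp π (colMean A)]
  simp only [rowMean, colMean, totMean, ← sum_div]
  rw [sum_comm (f := fun x i => A i x)]
  field_simp
  ring

lemma hat_sq (n : ℕ) (hn : 2 ≤ n) (A : Matrix (Fin n) (Fin n) ℝ) (hA : 0 < sdev A) :
    ∑ i, ∑ j, hatM A i j ^ 2 = n - 1 := by
  have n2 : (2 : ℝ) ≤ n := by exact_mod_cast hn
  have p1 : (n : ℝ) - 1 ≠ 0 := by linarith
  have h0 : 0 < sigma2 A := Real.sqrt_pos.1 hA
  have h1 : sdev A ^ 2 = sigma2 A := Real.sq_sqrt h0.le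
  simp only [hatM, div_pow, ← sum_div, h1]
  rw [div_eq_iff h0.ne', sigma2]
  field_simp

/-- exact formulas for the third and fourth moments of `𝒯_A`. -/
theorem rank_statistic_third_fourth_moment (n : ℕ) (hn : 2 ≤ n)
    (A : Matrix (Fin n) (Fin n) ℝ) (hA : 0 < sdev A) :
    (3 ≤ n →
      permExp (fun π => rankTstd A π ^ 3) =
        (n : ℝ) / (((n : ℝ) - 1) * ((n : ℝ) - 2)) * ∑ i, ∑ j, hatM A i j ^ 3) ∧
    (4 ≤ n →
      permExp (fun π => rankTstd A π ^ 4) =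
        3 * ((n : ℝ) ^ 2 - 3 * (n : ℝ) + 1) * ((n : ℝ) - 1) /
            ((n : ℝ) * ((n : ℝ) - 2) * ((n : ℝ) - 3))
          - 3 / (((n : ℝ) - 2) * ((n : ℝ) - 3)) *
              ∑ i, ∑ j, ∑ k, (hatM A i j ^ 2 * hatM A i k ^ 2 + hatM A i j ^ 2 * hatM A k j ^ 2)
          + (n : ℝ) * ((n : ℝ) + 1) / (((n : ℝ) - 1) * ((n : ℝ) - 2) * ((n : ℝ) - 3)) *
              ∑ i, ∑ j, hatM A i j ^ 4
          + 6 / ((n : ℝ) * ((n : ℝ) - 1) * ((n : ℝ) - 2) * ((n : ℝ) - 3)) *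
              ∑ i, ∑ j, ∑ k, ∑ h, hatM A i k * hatM A i h * hatM A j k * hatM A j h) := by
  have hf : (n.factorial : ℝ) ≠ 0 := by exact_mod_cast n.factorial_ne_zero
  refine ⟨fun h3 => ?_, fun h4 => ?_⟩
  · unfold permExp
    simp only [hat_std n hn A]
    rw [RankAux.third _ (hat_row n hn A) (hat_col n hn A) h3, mul_div_cancel_left₀ _ hf]
  · unfold permExp
    simp only [hat_std n hn A]
    rw [RankAux.fourth _ (hat_row n hn A) (hat_col n hn A) h4 (hat_sq n hn A hA),
      mul_div_cancel_left₀ _ hf]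
end
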